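/- arXiv:0806.4139 — 2 statements merged into one kernel-verified Lean document; each statement's English description precedes it below -/
import Mathlib

section
/- Let u ∈ C²(ℝ²) with |∇_G u| ∈ L^∞(ℝ²) and v ∈ C¹(ℝ²) with v ≥ 0. Then for every R > 0, ∫_{B_R(0)} ( ⟨∇_G u, ∇_G v⟩ + v Δ_G u ) dx dy ≥ −R² ‖∇_G u‖_{L^∞(ℝ²)} ∫_{∂B_1(0)} v(RX, R²Y) dH¹(X,Y), where ∂B_1(0) = {(X,Y) ∈ ℝ² : X⁴ + 4Y² = 1} and H¹ is the 1-dimensional Hausdorff measure. -/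
open MeasureTheory

/-- The Euclidean plane (with the Euclidean metric, so that the `1`-dimensional Hausdorff
measure `μH[1]` below is the Euclidean one). -/
abbrev E2 := EuclideanSpace ℝ (Fin 2)

/-- Partial derivative in the `x`-direction. -/
noncomputable def epX (u : E2 → ℝ) (p : E2) : ℝ := fderiv ℝ u p (EuclideanSpace.single 0 1)

/-- Partial derivative in the `y`-direction. -/
noncomputable def epY (u : E2 → ℝ) (p : E2) : ℝ := fderiv ℝ u p (EuclideanSpace.single 1 1)

/-- Second partial derivative in `x`. -/
noncomputable def epXX (u : E2 → ℝ) (p : E2) : ℝ :=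
  fderiv ℝ (epX u) p (EuclideanSpace.single 0 1)

/-- Second partial derivative in `y`. -/
noncomputable def epYY (u : E2 → ℝ) (p : E2) : ℝ :=
  fderiv ℝ (epY u) p (EuclideanSpace.single 1 1)

/-- The Grushin Laplacian `Δ_G u = ∂_xx u + x² ∂_yy u`. -/
noncomputable def egLap (u : E2 → ℝ) (p : E2) : ℝ := epXX u p + (p 0) ^ 2 * epYY u p

/-- The squared length of the Grushin gradient: `|∇_G u|² = (∂_x u)² + x² (∂_y u)²`. -/
noncomputable def egGradSq (u : E2 → ℝ) (p : E2) : ℝ :=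
  (epX u p) ^ 2 + (p 0) ^ 2 * (epY u p) ^ 2

/-- The Grushin ball of radius `R` centered at the origin:
`{(x,y) : (x⁴ + 4y²)^(1/4) < R}`. -/
def egBall (R : ℝ) : Set E2 := {p | ((p 0) ^ 4 + 4 * (p 1) ^ 2) ^ ((1 : ℝ) / 4) < R}

/-- The unit Grushin sphere `∂B₁(0) = {(X,Y) : X⁴ + 4Y² = 1}`. -/
def egSphere : Set E2 := {p | (p 0) ^ 4 + 4 * (p 1) ^ 2 = 1}

/-- The anisotropic dilation `(X,Y) ↦ (RX, R²Y)`. -/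
noncomputable def egScale (R : ℝ) (q : E2) : E2 :=
  (WithLp.equiv 2 (Fin 2 → ℝ)).symm ![R * q 0, R ^ 2 * q 1]

/-!
The Grushin sphere of radius `R` is the image under the anisotropic dilation of the closed curve
`γ(θ) = (sign (cos θ) √|cos θ|, sin θ / 2)`. Slicing the ball by horizontal and vertical lines, the
fundamental theorem of calculus and a change of variables along `γ` give the divergence theorem
`∫_{B_R} (∂_x a + x ∂_y b) = R² / 2 ∫ (cos θ · a + sign (cos θ) sin θ · b) dθ`, with `a` and `b`
evaluated at the dilation of `γ(θ)`; by Cauchy–Schwarz the integrand is at most `|(a, b)|`. Since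
`(X, Y) ↦ (X |X|, 2 Y)` is `2`-Lipschitz on the unit box and takes `γ` to the unit circle, the
measure `dθ / 2` along `γ` is at most `H¹`. The theorem is the case `(a, b) = v ∇_G u`, whose
divergence is the integrand of the statement.
-/

open Set Filter Topology Real
open scoped NNReal ENNReal

/-! ### Closed curves and Hausdorff measure -/

lemma exists_forall_mul_abs_le_abs_sin {a : ℝ} (ha : a < 1) :
    ∃ δ > 0, ∀ x : ℝ, |x| ≤ δ → a * |x| ≤ |sin x| := by
  have h_ev : ∀ᶠ x in 𝓝 (0 : ℝ), a < sinc x :=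
    continuous_sinc.continuousAt.eventually_const_lt (by rwa [sinc_zero])
  obtain ⟨δ, hδ, h⟩ := Metric.nhds_basis_closedBall.eventually_iff.1 h_ev
  refine ⟨δ, hδ, fun x hx => ?_⟩
  rcases eq_or_ne x 0 with rfl | hx0
  · simp
  have hlt : a < sinc x := h (by simpa using hx)
  rw [sinc_of_ne_zero hx0] at hlt
  calc a * |x| ≤ |sin x / x| * |x| := by gcongr; exact hlt.le.trans (le_abs_self _)
    _ = |sin x| := by rw [← abs_mul, div_mul_cancel₀ _ hx0]

lemma volume_preimage_inter_Ioc_eq {X : Type*} [MeasurableSpace X] {γ : ℝ → X} {T : ℝ}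
    (hT : 0 < T) (hγ : Measurable γ) (hper : Function.Periodic γ T) {s : Set X}
    (hs : MeasurableSet s) (a b : ℝ) :
    volume (γ ⁻¹' s ∩ Ioc a (a + T)) = volume (γ ⁻¹' s ∩ Ioc b (b + T)) := by
  have : VAddInvariantMeasure (AddSubgroup.zmultiples T) ℝ volume :=
    ⟨fun c s _ => measure_preimage_add _ _ _⟩
  refine (isAddFundamentalDomain_Ioc hT a).measure_set_eq (isAddFundamentalDomain_Ioc hT b)
    (hγ hs) fun g => ?_
  ext x
  simp only [mem_preimage, hper.map_vadd_zmultiples]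

lemma mul_volume_le_ediam_image {X : Type*} [PseudoMetricSpace X] {f : ℝ → X} {s : Set ℝ}
    {c : ℝ≥0} (hf : ∀ x ∈ s, ∀ y ∈ s, c * |x - y| ≤ dist (f x) (f y)) :
    c * volume s ≤ Metric.ediam (f '' s) := by
  rcases eq_or_ne c 0 with rfl | hc
  · simp
  have hc' : (c : ℝ≥0∞) ≠ 0 := ENNReal.coe_ne_zero.2 hc
  refine (mul_le_mul_right (Real.volume_le_diam s) _).trans ?_
  rw [ENNReal.mul_le_iff_le_inv hc' ENNReal.coe_ne_top]
  refine Metric.ediam_le fun x hx y hy => ?_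
  rw [← ENNReal.mul_le_iff_le_inv hc' ENNReal.coe_ne_top]
  calc c * edist x y = ENNReal.ofReal (c * |x - y|) := by
        rw [edist_dist, Real.dist_eq, ENNReal.ofReal_mul c.coe_nonneg, ENNReal.ofReal_coe_nnreal]
    _ ≤ edist (f x) (f y) := by rw [edist_dist]; exact ENNReal.ofReal_le_ofReal (hf x hx y hy)
    _ ≤ Metric.ediam (f '' s) :=
        Metric.edist_le_ediam_of_mem (mem_image_of_mem f hx) (mem_image_of_mem f hy)

section ClosedCurve

variable {X : Type*} [MetricSpace X] {γ : ℝ → X} {a c : ℝ≥0}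

lemma exists_forall_mul_abs_sub_le_dist (ha : a < 1) (hc : 0 < c)
    (hchord : ∀ s t, c * (2 * |sin ((s - t) / 2)|) ≤ dist (γ s) (γ t)) :
    ∃ ε > 0, ∀ r s t, |s - r| ≤ π → |t - r| ≤ π → dist (γ s) (γ r) ≤ ε → dist (γ t) (γ r) ≤ ε →
      (a * c : ℝ≥0) * |s - t| ≤ dist (γ s) (γ t) := by
  obtain ⟨δ, hδ, hsin⟩ := exists_forall_mul_abs_le_abs_sin (NNReal.coe_lt_one.2 ha)
  have near {s r : ℝ} (hsr : |s - r| ≤ π) (hd : dist (γ s) (γ r) ≤ c * (2 * (2 / π * (δ / 2)))) :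
      |(s - r) / 2| ≤ δ / 2 := by
    have hjordan : 2 / π * |(s - r) / 2| ≤ |sin ((s - r) / 2)| :=
      mul_abs_le_abs_sin (by rw [abs_div, abs_two]; linarith)
    have hle : 2 * |sin ((s - r) / 2)| ≤ 2 * (2 / π * (δ / 2)) :=
      le_of_mul_le_mul_left ((hchord s r).trans hd) hc
    exact le_of_mul_le_mul_left (hjordan.trans (by linarith)) (by positivity)
  refine ⟨c * (2 * (2 / π * (δ / 2))), by positivity, fun r s t hs ht hds hdt => ?_⟩
  have hst : |(s - t) / 2| ≤ δ := by
    calc |(s - t) / 2| = |(s - r) / 2 - (t - r) / 2| := by ring_nf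
      _ ≤ |(s - r) / 2| + |(t - r) / 2| := abs_sub _ _
      _ ≤ δ := by linarith [near hs hds, near ht hdt]
  calc (a * c : ℝ≥0) * |s - t| = c * (2 * (a * |(s - t) / 2|)) := by
        rw [abs_div, abs_two]; push_cast; ring
    _ ≤ c * (2 * |sin ((s - t) / 2)|) := by gcongr; exact hsin _ hst
    _ ≤ dist (γ s) (γ t) := hchord s t

variable [MeasurableSpace X] [BorelSpace X]

/- Near a given parameter the chord of the unit circle is comparable to the arc with a constant
arbitrarily close to `1`, so sets of small diameter have short preimages. -/
lemma mul_smul_map_Ioc_le_hausdorffMeasure (hγ : Continuous γ)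
    (hper : Function.Periodic γ (2 * π)) (ha : a < 1) (hc : 0 < c)
    (hchord : ∀ s t, c * (2 * |sin ((s - t) / 2)|) ≤ dist (γ s) (γ t)) :
    (a * c) • (volume.restrict (Ioc (-π) π)).map γ ≤ μH[1] := by
  obtain ⟨ε, hε, hexp⟩ := exists_forall_mul_abs_sub_le_dist ha hc hchord
  refine Measure.le_hausdorffMeasure 1 _ (ENNReal.ofReal ε) (by positivity) fun s hs => ?_
  rw [← Metric.ediam_closure] at hs
  have map_apply : (volume.restrict (Ioc (-π) π)).map γ (closure s) =
      volume (γ ⁻¹' closure s ∩ Ioc (-π) (-π + 2 * π)) := by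
    rw [Measure.map_apply hγ.measurable measurableSet_closure,
      Measure.restrict_apply (hγ.measurable measurableSet_closure)]
    ring_nf
  rcases (γ ⁻¹' closure s).eq_empty_or_nonempty with hempty | ⟨r, hr⟩
  · have hzero : (volume.restrict (Ioc (-π) π)).map γ (closure s) = 0 := by
      rw [map_apply, hempty, empty_inter, measure_empty]
    simp [measure_mono_null subset_closure hzero]
  set S := γ ⁻¹' closure s ∩ Ioc (r - π) (r - π + 2 * π)
  have hS : ∀ t ∈ S, |t - r| ≤ π ∧ dist (γ t) (γ r) ≤ ε := fun t ht => by
    refine ⟨abs_le.2 ⟨by linarith [ht.2.1], by linarith [ht.2.2]⟩, ?_⟩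
    rw [← ENNReal.ofReal_le_ofReal_iff hε.le, ← edist_dist]
    exact (Metric.edist_le_ediam_of_mem (s := closure s) ht.1 hr).trans hs
  calc ((a * c) • (volume.restrict (Ioc (-π) π)).map γ) s
      ≤ ((a * c) • (volume.restrict (Ioc (-π) π)).map γ) (closure s) := measure_mono subset_closure
    _ = (a * c : ℝ≥0) * volume S := by
        rw [Measure.smul_apply, map_apply, volume_preimage_inter_Ioc_eq two_pi_pos hγ.measurable
          hper measurableSet_closure, ENNReal.smul_def, smul_eq_mul]
    _ ≤ Metric.ediam (γ '' S) := mul_volume_le_ediam_image fun x hx y hy =>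
        hexp r x y (hS x hx).1 (hS y hy).1 (hS x hx).2 (hS y hy).2
    _ ≤ Metric.ediam (closure s) := Metric.ediam_mono (image_subset_iff.2 inter_subset_left)
    _ = Metric.ediam s ^ (1 : ℝ) := by rw [Metric.ediam_closure, ENNReal.rpow_one]

lemma smul_map_Ioc_le_hausdorffMeasure (hγ : Continuous γ)
    (hper : Function.Periodic γ (2 * π))
    (hchord : ∀ s t, c * (2 * |sin ((s - t) / 2)|) ≤ dist (γ s) (γ t)) :
    c • (volume.restrict (Ioc (-π) π)).map γ ≤ μH[1] := by
  rcases eq_zero_or_pos c with rfl | hc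
  · simpa using Measure.zero_le _
  refine Measure.le_iff.2 fun s _ => ENNReal.le_of_forall_lt_one_mul_le fun a ha => ?_
  lift a to ℝ≥0 using ha.ne_top
  have h := mul_smul_map_Ioc_le_hausdorffMeasure hγ hper (by exact_mod_cast ha) hc hchord s
  rwa [mul_smul] at h

end ClosedCurve

/-! ### The Grushin sphere -/

lemma E2.dist_sq_eq (p q : E2) : dist p q ^ 2 = (p 0 - q 0) ^ 2 + (p 1 - q 1) ^ 2 := by
  rw [EuclideanSpace.dist_eq, sq_sqrt (by positivity)]
  simp [Fin.sum_univ_two, Real.dist_eq, sq_abs]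

lemma hausdorffMeasure_one_lt_top_of_dist_le_dist {X : Type*} [MetricSpace X] [MeasurableSpace X]
    [BorelSpace X] {f : X → ℝ} {s : Set X} (hf : ∀ p ∈ s, ∀ q ∈ s, dist p q ≤ dist (f p) (f q))
    (hbdd : Bornology.IsBounded (f '' s)) : μH[1] s < ∞ := by
  have hanti : AntilipschitzWith 1 (s.domRestrict f) :=
    AntilipschitzWith.of_le_mul_dist fun p q => by
      simpa [Subtype.dist_eq] using hf p p.2 q q.2
  calc μH[1] s = μH[1] (univ : Set s) := by
        rw [← (isometry_subtype_coe (s := s)).hausdorffMeasure_image (.inl zero_le_one), image_univ,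
          Subtype.range_coe]
    _ ≤ (1 : ℝ≥0) ^ (1 : ℝ) * μH[1] (s.domRestrict f '' univ) :=
        hanti.le_hausdorffMeasure_image zero_le_one univ
    _ = volume (f '' s) := by
        rw [image_univ, range_domRestrict, hausdorffMeasure_real]; simp
    _ < ∞ := hbdd.measure_lt_top

lemma hausdorffMeasure_one_lt_top_of_mul_nonpos {s : Set E2} (hs : Bornology.IsBounded s) {σ : ℝ}
    (hσ : σ ^ 2 = 1) (hmono : ∀ p ∈ s, ∀ q ∈ s, σ * ((p 0 - q 0) * (p 1 - q 1)) ≤ 0) :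
    μH[1] s < ∞ := by
  let f : E2 →L[ℝ] ℝ := EuclideanSpace.proj 0 - σ • EuclideanSpace.proj 1
  refine hausdorffMeasure_one_lt_top_of_dist_le_dist (f := f) (fun p hp q hq => ?_)
    (f.lipschitz.isBounded_image hs)
  refine le_of_sq_le_sq ?_ dist_nonneg
  have hf (p : E2) : f p = p 0 - σ * p 1 := by simp [f]
  rw [E2.dist_sq_eq, Real.dist_eq, sq_abs, hf, hf]
  nlinarith [hmono p hp q hq]

lemma mem_egSphere {p : E2} : p ∈ egSphere ↔ p 0 ^ 4 + 4 * p 1 ^ 2 = 1 := Iff.rfl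

lemma isCompact_egSphere : IsCompact egSphere := by
  refine Metric.isCompact_of_isClosed_isBounded (isClosed_eq (by fun_prop) (by fun_prop))
    ((Metric.isBounded_iff_subset_closedBall 0).2 ⟨2, fun p hp => ?_⟩)
  rw [mem_egSphere] at hp
  rw [Metric.mem_closedBall]
  refine le_of_sq_le_sq ?_ zero_le_two
  rw [E2.dist_sq_eq]
  simp only [PiLp.zero_apply, sub_zero]
  nlinarith [sq_nonneg (p 0 ^ 2 - 1), sq_nonneg (p 1)]

lemma hausdorffMeasure_egSphere_inter_quadrant_lt_top {σ τ : ℝ} (hσ : σ ^ 2 = 1) (hτ : τ ^ 2 = 1) :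
    μH[1] (egSphere ∩ {p | 0 ≤ σ * p 0 ∧ 0 ≤ τ * p 1}) < ∞ := by
  refine hausdorffMeasure_one_lt_top_of_mul_nonpos (σ := σ * τ)
    (isCompact_egSphere.isBounded.subset inter_subset_left) (by rw [mul_pow, hσ, hτ, one_mul]) ?_
  rintro p ⟨hp, hp0, hp1⟩ q ⟨hq, hq0, hq1⟩
  have hpq : (σ * p 0) ^ 4 + 4 * (τ * p 1) ^ 2 = (σ * q 0) ^ 4 + 4 * (τ * q 1) ^ 2 := by
    have hσ4 : σ ^ 4 = 1 := by rw [show σ ^ 4 = (σ ^ 2) ^ 2 by ring, hσ, one_pow]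
    rw [mul_pow, mul_pow, mul_pow, mul_pow, hσ4, hτ, one_mul, one_mul, one_mul, one_mul]
    exact hp.trans hq.symm
  rw [show σ * τ * ((p 0 - q 0) * (p 1 - q 1)) = (σ * p 0 - σ * q 0) * (τ * p 1 - τ * q 1) by ring]
  rcases le_total (σ * p 0) (σ * q 0) with h | h
  · have h4 := pow_le_pow_left₀ hp0 h 4
    exact mul_nonpos_of_nonpos_of_nonneg (sub_nonpos.2 h)
      (sub_nonneg.2 (le_of_sq_le_sq (by linarith) hp1))
  · have h4 := pow_le_pow_left₀ hq0 h 4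
    exact mul_nonpos_of_nonneg_of_nonpos (sub_nonneg.2 h)
      (sub_nonpos.2 (le_of_sq_le_sq (by linarith) hq1))

lemma hausdorffMeasure_egSphere_lt_top : μH[1] egSphere < ∞ := by
  let Q (σ τ : ℝ) : Set E2 := egSphere ∩ {p | 0 ≤ σ * p 0 ∧ 0 ≤ τ * p 1}
  have hQ (i j : Bool) : μH[1] (Q (bif i then 1 else -1) (bif j then 1 else -1)) < ∞ :=
    hausdorffMeasure_egSphere_inter_quadrant_lt_top (by cases i <;> simp) (by cases j <;> simp)
  have hcover : egSphere ⊆ (Q 1 1 ∪ Q 1 (-1)) ∪ (Q (-1) 1 ∪ Q (-1) (-1)) := fun p hp => by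
    rcases le_total 0 (p 0) with h0 | h0 <;> rcases le_total 0 (p 1) with h1 | h1 <;>
      simp [Q, hp, h0, h1]
  exact (measure_mono hcover).trans_lt (measure_union_lt_top
    (measure_union_lt_top (hQ true true) (hQ true false))
    (measure_union_lt_top (hQ false true) (hQ false false)))

lemma integrableOn_egSphere {f : E2 → ℝ} (hf : Continuous f) : IntegrableOn f egSphere μH[1] := by
  obtain ⟨C, hC⟩ := isCompact_egSphere.exists_bound_of_continuousOn hf.continuousOn
  exact IntegrableOn.of_bound hausdorffMeasure_egSphere_lt_top hf.aestronglyMeasurable C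
    ((ae_restrict_iff' isCompact_egSphere.measurableSet).2 (.of_forall hC))

/-- The signed square root `t ↦ sign t · √|t|`, the inverse of `x ↦ x |x|`. Exactly one of the two
terms can be nonzero, since `√` vanishes on negative numbers. -/
noncomputable def signedSqrt (t : ℝ) : ℝ := √t - √(-t)

@[fun_prop]
lemma continuous_signedSqrt : Continuous signedSqrt := by
  unfold signedSqrt; fun_prop

lemma signedSqrt_of_nonneg {t : ℝ} (ht : 0 ≤ t) : signedSqrt t = √t := by
  rw [signedSqrt, sqrt_eq_zero_of_nonpos (neg_nonpos.2 ht), sub_zero]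

lemma signedSqrt_neg (t : ℝ) : signedSqrt (-t) = -signedSqrt t := by
  rw [signedSqrt, signedSqrt, neg_neg, neg_sub]

lemma signedSqrt_eq_sign_mul_sqrt_abs (t : ℝ) : signedSqrt t = sign t * √|t| := by
  rcases lt_trichotomy t 0 with h | rfl | h
  · rw [← neg_neg t, signedSqrt_neg, signedSqrt_of_nonneg (neg_nonneg.2 h.le), neg_neg,
      sign_of_neg h, abs_of_neg h, neg_one_mul]
  · simp [signedSqrt]
  · rw [signedSqrt_of_nonneg h.le, sign_of_pos h, abs_of_pos h, one_mul]

lemma signedSqrt_mul_abs_signedSqrt (t : ℝ) : signedSqrt t * |signedSqrt t| = t := by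
  rcases le_total 0 t with h | h
  · rw [signedSqrt_of_nonneg h, abs_of_nonneg (sqrt_nonneg t), mul_self_sqrt h]
  · rw [← neg_neg t, signedSqrt_neg, signedSqrt_of_nonneg (neg_nonneg.2 h), abs_neg,
      abs_of_nonneg (sqrt_nonneg _), neg_mul, mul_self_sqrt (neg_nonneg.2 h)]

lemma sq_signedSqrt (t : ℝ) : signedSqrt t ^ 2 = |t| := by
  rw [← sq_abs, sq]
  nth_rw 2 [← abs_abs (signedSqrt t)]
  rw [← abs_mul, signedSqrt_mul_abs_signedSqrt]

lemma signedSqrt_pow_four (t : ℝ) : signedSqrt t ^ 4 = t ^ 2 := by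
  rw [show signedSqrt t ^ 4 = (signedSqrt t ^ 2) ^ 2 by ring, sq_signedSqrt, sq_abs]

lemma abs_sub_le_two_mul_abs_signedSqrt_sub {s t : ℝ} (hs : |s| ≤ 1) (ht : |t| ≤ 1) :
    |s - t| ≤ 2 * |signedSqrt s - signedSqrt t| := by
  have abs_le_one {r : ℝ} (hr : |r| ≤ 1) : |signedSqrt r| ≤ 1 :=
    (sq_le_one_iff_abs_le_one _).1 (by rwa [sq_signedSqrt])
  set x := signedSqrt s
  set y := signedSqrt t
  calc |s - t| = |(x - y) * |x| + (|x| - |y|) * y| := by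
        congr 1
        linear_combination -signedSqrt_mul_abs_signedSqrt s + signedSqrt_mul_abs_signedSqrt t
    _ ≤ |x - y| * |x| + |(|x| - |y|)| * |y| := by
        refine (abs_add_le _ _).trans_eq ?_; rw [abs_mul, abs_mul, abs_abs]
    _ ≤ |x - y| * 1 + |x - y| * 1 := by
        gcongr |x - y| * ?_ + ?_ * ?_
        exacts [abs_le_one hs, abs_abs_sub_abs_le x y, abs_le_one ht]
    _ = 2 * |x - y| := by ring

lemma hasDerivAt_signedSqrt {t : ℝ} (ht : t ≠ 0) :
    HasDerivAt signedSqrt (1 / (2 * √|t|)) t := by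
  rcases ht.lt_or_gt with h | h
  · rw [abs_of_neg h]
    have hleft : HasDerivAt (fun t => -√(-t)) (-(-1 / (2 * √(-t)))) t :=
      ((hasDerivAt_neg t).sqrt (neg_ne_zero.2 ht)).neg
    rw [neg_div, neg_neg] at hleft
    refine hleft.congr_of_eventuallyEq ((eventually_lt_nhds h).mono fun x hx => ?_)
    rw [signedSqrt, sqrt_eq_zero_of_nonpos hx.le, zero_sub]
  · rw [abs_of_pos h]
    exact (hasDerivAt_sqrt ht).congr_of_eventuallyEq
      ((eventually_gt_nhds h).mono fun x hx => signedSqrt_of_nonneg hx.le)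

/-- Parametrization of the Grushin sphere by the angle on the unit circle. -/
noncomputable def egCurve (θ : ℝ) : E2 := !₂[signedSqrt (cos θ), sin θ / 2]

@[fun_prop]
lemma continuous_egCurve : Continuous egCurve := by
  unfold egCurve; fun_prop

lemma periodic_egCurve : Function.Periodic egCurve (2 * π) := fun θ => by
  rw [egCurve, egCurve, cos_add_two_pi, sin_add_two_pi]

lemma egCurve_mem_egSphere (θ : ℝ) : egCurve θ ∈ egSphere := by
  have h : signedSqrt (cos θ) ^ 4 + 4 * (sin θ / 2) ^ 2 = 1 := by
    rw [signedSqrt_pow_four]; linear_combination sin_sq_add_cos_sq θ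
  simpa [mem_egSphere, egCurve] using h

/- The map `(X, Y) ↦ (X |X|, 2 Y)` is `2`-Lipschitz on the unit box and takes `egCurve` to the unit
circle, whose chords have length `2 |sin ((s - t) / 2)|`. -/
lemma abs_sin_half_sub_le_dist_egCurve (s t : ℝ) :
    |sin ((s - t) / 2)| ≤ dist (egCurve s) (egCurve t) := by
  have hchord : 4 * sin ((s - t) / 2) ^ 2 = (cos s - cos t) ^ 2 + (sin s - sin t) ^ 2 := by
    have hhalf : 4 * sin ((s - t) / 2) ^ 2 = 2 - 2 * cos (s - t) := by
      rw [show s - t = 2 * ((s - t) / 2) by ring, cos_two_mul, cos_sq']; ring_nf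
    rw [hhalf, cos_sub]
    linear_combination -sin_sq_add_cos_sq s - sin_sq_add_cos_sq t
  have hcos : (cos s - cos t) ^ 2 ≤ (2 * (signedSqrt (cos s) - signedSqrt (cos t))) ^ 2 := by
    rw [sq_le_sq, abs_mul, abs_two]
    exact abs_sub_le_two_mul_abs_signedSqrt_sub (abs_cos_le_one s) (abs_cos_le_one t)
  refine abs_le_of_sq_le_sq ?_ dist_nonneg
  rw [E2.dist_sq_eq]
  simp only [egCurve, Matrix.cons_val_zero, Matrix.cons_val_one]
  linarith

lemma half_mul_integral_egCurve_le {f : E2 → ℝ} (hf : Continuous f) (hf0 : ∀ p, 0 ≤ f p) :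
    (1 / 2) * ∫ θ in -π..π, f (egCurve θ) ≤ ∫ q in egSphere, f q ∂μH[1] := by
  set ν : Measure E2 := (volume.restrict (Ioc (-π) π)).map egCurve
  have hmeas : AEMeasurable egCurve (volume.restrict (Ioc (-π) π)) :=
    continuous_egCurve.measurable.aemeasurable
  have hν : (1 / 2 : ℝ≥0) • ν ≤ μH[1] :=
    smul_map_Ioc_le_hausdorffMeasure continuous_egCurve periodic_egCurve fun s t => by
      simpa using abs_sin_half_sub_le_dist_egCurve s t
  have hν_mem : ∀ᵐ p ∂(1 / 2 : ℝ≥0) • ν, p ∈ egSphere :=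
    Measure.ae_smul_measure ((ae_map_iff hmeas isCompact_egSphere.measurableSet).2
      (.of_forall egCurve_mem_egSphere)) _
  have hν_le : (1 / 2 : ℝ≥0) • ν ≤ μH[1].restrict egSphere := by
    rw [← Measure.restrict_eq_self_of_ae_mem hν_mem]
    exact Measure.restrict_mono subset_rfl hν
  calc (1 / 2) * ∫ θ in -π..π, f (egCurve θ) = ∫ p, f p ∂(1 / 2 : ℝ≥0) • ν := by
        rw [integral_smul_nnreal_measure, integral_map hmeas hf.aestronglyMeasurable,
          intervalIntegral.integral_of_le (by linarith [pi_pos])]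
        simp [NNReal.smul_def]
    _ ≤ ∫ q in egSphere, f q ∂μH[1] :=
        integral_mono_measure hν_le (.of_forall hf0) (integrableOn_egSphere hf)

/-! ### The Grushin ball -/

lemma setIntegral_regionBetween {α E : Type*} [MeasurableSpace α] [NormedAddCommGroup E]
    [NormedSpace ℝ E] {μ : Measure α} [SFinite μ] {f g : α → ℝ} {s : Set α} {F : α × ℝ → E}
    (hf : Measurable f) (hg : Measurable g) (hs : MeasurableSet s)
    (hF : IntegrableOn F (regionBetween f g s) (μ.prod volume)) :
    ∫ z in regionBetween f g s, F z ∂μ.prod volume =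
      ∫ x in s, (∫ y in Ioo (f x) (g x), F (x, y)) ∂μ := by
  have hreg : MeasurableSet (regionBetween f g s) := measurableSet_regionBetween hf hg hs
  rw [← integral_indicator hreg, integral_prod _ (hF.integrable_indicator hreg),
    ← integral_indicator hs]
  congr 1 with x
  by_cases hx : x ∈ s
  · rw [indicator_of_mem hx, ← integral_indicator measurableSet_Ioo]
    congr 1 with y
    simp only [indicator, regionBetween, mem_ofPred_eq, hx, true_and]
  · simp [regionBetween, indicator, hx]

lemma setIntegral_eq_of_preimage_eq_regionBetween {α X E : Type*} [MeasureSpace α]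
    [SFinite (volume : Measure α)] [MeasureSpace X] [NormedAddCommGroup E] [NormedSpace ℝ E]
    {e : α × ℝ ≃ᵐ X} (he : MeasurePreserving e) {f g : α → ℝ} {s : Set α} {A : Set X} {F : X → E}
    (hf : Measurable f) (hg : Measurable g) (hs : MeasurableSet s)
    (hA : e ⁻¹' A = regionBetween f g s) (hF : IntegrableOn F A) :
    ∫ p in A, F p = ∫ x in s, ∫ y in Ioo (f x) (g x), F (e (x, y)) := by
  rw [← he.setIntegral_preimage_emb e.measurableEmbedding, hA]
  refine setIntegral_regionBetween hf hg hs ?_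
  rw [← hA]
  exact (he.integrableOn_comp_preimage e.measurableEmbedding).2 hF

/-- The Euclidean plane as a product of two lines. -/
noncomputable def E2.ofProd : ℝ × ℝ ≃ᵐ E2 :=
  MeasurableEquiv.finTwoArrow.symm.trans (MeasurableEquiv.toLp 2 (Fin 2 → ℝ))

lemma E2.ofProd_apply (x y : ℝ) : E2.ofProd (x, y) = !₂[x, y] := rfl

lemma E2.measurePreserving_ofProd : MeasurePreserving E2.ofProd :=
  (PiLp.volume_preserving_toLp (Fin 2)).comp
    ((volume_preserving_finTwoArrow ℝ).symm MeasurableEquiv.finTwoArrow)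

/-- For `0 ≤ R`, half the length of the slice of `egBall R` on the vertical line of abscissa `x`. -/
noncomputable def egBallHeight (R x : ℝ) : ℝ := √(R ^ 4 - x ^ 4) / 2

/-- For `0 ≤ R`, half the length of the slice of `egBall R` on the horizontal line of ordinate
`y`. -/
noncomputable def egBallWidth (R y : ℝ) : ℝ := √√(R ^ 4 - 4 * y ^ 2)

section Ball

variable {R : ℝ}

@[fun_prop]
lemma continuous_egBallHeight (R : ℝ) : Continuous (egBallHeight R) := by
  unfold egBallHeight; fun_prop

@[fun_prop]
lemma continuous_egBallWidth (R : ℝ) : Continuous (egBallWidth R) := by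
  unfold egBallWidth; fun_prop

lemma abs_lt_egBallHeight_iff {x y : ℝ} : |y| < egBallHeight R x ↔ x ^ 4 + 4 * y ^ 2 < R ^ 4 := by
  rw [egBallHeight, lt_div_iff₀ two_pos, lt_sqrt (by positivity), mul_pow, sq_abs,
    lt_sub_iff_add_lt']
  ring_nf

lemma abs_lt_egBallWidth_iff {x y : ℝ} : |x| < egBallWidth R y ↔ x ^ 4 + 4 * y ^ 2 < R ^ 4 := by
  rw [egBallWidth, lt_sqrt (abs_nonneg x), lt_sqrt (sq_nonneg _), sq_abs, ← pow_mul,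
    lt_sub_iff_add_lt]

lemma egBallHeight_mul_signedSqrt_cos {θ : ℝ} (hθ : 0 ≤ sin θ) :
    egBallHeight R (R * signedSqrt (cos θ)) = R ^ 2 / 2 * sin θ := by
  have h : R ^ 4 - (R * signedSqrt (cos θ)) ^ 4 = (R ^ 2 * sin θ) ^ 2 := by
    rw [mul_pow, signedSqrt_pow_four]; linear_combination -R ^ 4 * sin_sq_add_cos_sq θ
  rw [egBallHeight, h, sqrt_sq (by positivity)]
  ring

lemma egBallWidth_mul_sin (hR : 0 ≤ R) {θ : ℝ} (hθ : 0 ≤ cos θ) :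
    egBallWidth R (R ^ 2 / 2 * sin θ) = R * signedSqrt (cos θ) := by
  have h : R ^ 4 - 4 * (R ^ 2 / 2 * sin θ) ^ 2 = (R ^ 2 * cos θ) ^ 2 := by
    linear_combination -R ^ 4 * sin_sq_add_cos_sq θ
  rw [egBallWidth, h, sqrt_sq (by positivity), sqrt_mul (by positivity), sqrt_sq hR,
    signedSqrt_of_nonneg hθ]

lemma mem_egBall (hR : 0 ≤ R) {p : E2} : p ∈ egBall R ↔ p 0 ^ 4 + 4 * p 1 ^ 2 < R ^ 4 := by
  rw [egBall, mem_ofPred_eq, one_div, rpow_inv_lt_iff_of_pos (by positivity) hR (by norm_num)]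
  norm_cast

lemma abs_fst_lt_of_lt {x y : ℝ} (hR : 0 ≤ R) (h : x ^ 4 + 4 * y ^ 2 < R ^ 4) : |x| < R := by
  refine lt_of_pow_lt_pow_left₀ 4 hR ?_
  rw [Even.pow_abs (by decide)]
  linarith [sq_nonneg y]

lemma abs_snd_lt_of_lt {x y : ℝ} (h : x ^ 4 + 4 * y ^ 2 < R ^ 4) : |y| < R ^ 2 / 2 :=
  abs_lt_of_sq_lt_sq (by linarith [show 0 ≤ x ^ 4 by positivity]) (by positivity)

lemma integrableOn_egBall (hR : 0 ≤ R) {g : E2 → ℝ} (hg : Continuous g) :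
    IntegrableOn g (egBall R) := by
  refine (hg.continuousOn.integrableOn_compact (isCompact_closedBall 0 (R + R ^ 2 / 2))).mono_set
    fun p hp => ?_
  rw [mem_egBall hR] at hp
  have h0 : p 0 ^ 2 ≤ R ^ 2 := sq_le_sq.2 ((abs_fst_lt_of_lt hR hp).le.trans (le_abs_self R))
  have h1 : p 1 ^ 2 ≤ (R ^ 2 / 2) ^ 2 :=
    sq_le_sq.2 ((abs_snd_lt_of_lt hp).le.trans (le_abs_self _))
  rw [Metric.mem_closedBall]
  refine le_of_sq_le_sq ?_ (by positivity)
  rw [E2.dist_sq_eq]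
  simp only [PiLp.zero_apply, sub_zero]
  nlinarith [show 0 ≤ R * R ^ 2 by positivity]

lemma setIntegral_egBall_eq_integral_vertical (hR : 0 ≤ R) {g : E2 → ℝ} (hg : Continuous g) :
    ∫ p in egBall R, g p =
      ∫ x in -R..R, ∫ y in -egBallHeight R x..egBallHeight R x, g !₂[x, y] := by
  have hslice : E2.ofProd ⁻¹' egBall R =
      regionBetween (fun x => -egBallHeight R x) (egBallHeight R) (Ioo (-R) R) := by
    ext ⟨x, y⟩
    simp only [mem_preimage, mem_egBall hR, E2.ofProd_apply, regionBetween, mem_ofPred_eq, mem_Ioo,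
      ← abs_lt, abs_lt_egBallHeight_iff]
    exact ⟨fun h => ⟨abs_fst_lt_of_lt hR h, h⟩, And.right⟩
  rw [setIntegral_eq_of_preimage_eq_regionBetween E2.measurePreserving_ofProd
    (continuous_egBallHeight R).neg.measurable (continuous_egBallHeight R).measurable
    measurableSet_Ioo hslice (integrableOn_egBall hR hg),
    intervalIntegral.integral_of_le (by linarith), integral_Ioc_eq_integral_Ioo]
  congr 1 with x
  rw [intervalIntegral.integral_of_le (neg_le_self (by unfold egBallHeight; positivity)),
    integral_Ioc_eq_integral_Ioo]
  rfl

lemma setIntegral_egBall_eq_integral_horizontal (hR : 0 ≤ R) {g : E2 → ℝ} (hg : Continuous g) :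
    ∫ p in egBall R, g p =
      ∫ y in -(R ^ 2 / 2)..R ^ 2 / 2, ∫ x in -egBallWidth R y..egBallWidth R y, g !₂[x, y] := by
  have hslice : (MeasurableEquiv.prodComm.trans E2.ofProd) ⁻¹' egBall R =
      regionBetween (fun y => -egBallWidth R y) (egBallWidth R)
        (Ioo (-(R ^ 2 / 2)) (R ^ 2 / 2)) := by
    ext ⟨y, x⟩
    change E2.ofProd (x, y) ∈ egBall R ↔ _
    simp only [mem_egBall hR, E2.ofProd_apply, regionBetween, mem_ofPred_eq, mem_Ioo,
      ← abs_lt, abs_lt_egBallWidth_iff]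
    exact ⟨fun h => ⟨abs_snd_lt_of_lt h, h⟩, And.right⟩
  rw [setIntegral_eq_of_preimage_eq_regionBetween (e := MeasurableEquiv.prodComm.trans E2.ofProd)
    (E2.measurePreserving_ofProd.comp Measure.measurePreserving_swap)
    (continuous_egBallWidth R).neg.measurable (continuous_egBallWidth R).measurable
    measurableSet_Ioo hslice (integrableOn_egBall hR hg),
    intervalIntegral.integral_of_le (by linarith [sq_nonneg R]), integral_Ioc_eq_integral_Ioo]
  congr 1 with y
  rw [intervalIntegral.integral_of_le (neg_le_self (by unfold egBallWidth; positivity)),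
    integral_Ioc_eq_integral_Ioo]
  rfl

end Ball

/-! ### Partial derivatives -/

section PartialDerivatives

variable {u v : E2 → ℝ}

lemma E2.hasDerivAt_mk {f g : ℝ → ℝ} {f' g' t : ℝ} (hf : HasDerivAt f f' t)
    (hg : HasDerivAt g g' t) : HasDerivAt (fun t => (!₂[f t, g t] : E2)) !₂[f', g'] t := by
  have h : HasDerivAt (fun t => ![f t, g t]) ![f', g'] t := hasDerivAt_pi.2 fun i => by
    fin_cases i
    exacts [hf, hg]
  exact (PiLp.hasFDerivAt_toLp 2 ![f t, g t]).comp_hasDerivAt t h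

lemma hasDerivAt_epX {x y : ℝ} (hu : DifferentiableAt ℝ u !₂[x, y]) :
    HasDerivAt (fun x => u !₂[x, y]) (epX u !₂[x, y]) x := by
  have he : EuclideanSpace.single 0 1 = (!₂[1, 0] : E2) := by
    ext i; fin_cases i <;> simp
  rw [epX, he]
  exact hu.hasFDerivAt.comp_hasDerivAt x (E2.hasDerivAt_mk (hasDerivAt_id x) (hasDerivAt_const x y))

lemma hasDerivAt_epY {x y : ℝ} (hu : DifferentiableAt ℝ u !₂[x, y]) :
    HasDerivAt (fun y => u !₂[x, y]) (epY u !₂[x, y]) y := by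
  have he : EuclideanSpace.single 1 1 = (!₂[0, 1] : E2) := by
    ext i; fin_cases i <;> simp
  rw [epY, he]
  exact hu.hasFDerivAt.comp_hasDerivAt y (E2.hasDerivAt_mk (hasDerivAt_const y x) (hasDerivAt_id y))

lemma continuous_epX (hu : ContDiff ℝ 1 u) : Continuous (epX u) :=
  (hu.continuous_fderiv one_ne_zero).clm_apply continuous_const

lemma continuous_epY (hu : ContDiff ℝ 1 u) : Continuous (epY u) :=
  (hu.continuous_fderiv one_ne_zero).clm_apply continuous_const

lemma contDiff_epX (hu : ContDiff ℝ 2 u) : ContDiff ℝ 1 (epX u) :=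
  (hu.fderiv_right (by norm_num)).clm_apply contDiff_const

lemma contDiff_epY (hu : ContDiff ℝ 2 u) : ContDiff ℝ 1 (epY u) :=
  (hu.fderiv_right (by norm_num)).clm_apply contDiff_const

lemma epX_mul {p : E2} (hu : DifferentiableAt ℝ u p) (hv : DifferentiableAt ℝ v p) :
    epX (fun p => u p * v p) p = u p * epX v p + v p * epX u p := by
  simp [epX, fderiv_fun_mul hu hv]

lemma epY_mul {p : E2} (hu : DifferentiableAt ℝ u p) (hv : DifferentiableAt ℝ v p) :
    epY (fun p => u p * v p) p = u p * epY v p + v p * epY u p := by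
  simp [epY, fderiv_fun_mul hu hv]

lemma epY_apply_zero (p : E2) : epY (fun p => p 0) p = 0 := by
  rw [epY, show (fun p : E2 => p 0) = EuclideanSpace.proj (𝕜 := ℝ) 0 from rfl,
    ContinuousLinearMap.fderiv]
  simp

end PartialDerivatives

/-! ### The divergence theorem on the Grushin ball -/

section AngularSubstitution

variable {E : Type*} [NormedAddCommGroup E] [NormedSpace ℝ E]

lemma integral_neg_pi_pi_eq_integral_add_comp_neg {F : ℝ → E}
    (hF : ∀ a b, IntervalIntegrable F volume a b) :
    ∫ θ in -π..π, F θ = ∫ θ in 0..π, (F θ + F (-θ)) := by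
  have hneg : IntervalIntegrable (fun θ => F (-θ)) volume 0 π := by
    simpa using (IntervalIntegrable.iff_comp_neg (by simp)).1 (hF 0 (-π))
  rw [intervalIntegral.integral_add (hF 0 π) hneg, intervalIntegral.integral_comp_neg, neg_zero,
    add_comm, intervalIntegral.integral_add_adjacent_intervals (hF _ _) (hF _ _)]

lemma integral_neg_pi_pi_eq_integral_add_comp_pi_sub {F : ℝ → E}
    (hF : ∀ a b, IntervalIntegrable F volume a b) (hper : Function.Periodic F (2 * π)) :
    ∫ θ in -π..π, F θ = ∫ θ in -(π / 2)..π / 2, (F θ + F (π - θ)) := by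
  have hsub : IntervalIntegrable (fun θ => F (π - θ)) volume (-(π / 2)) (π / 2) := by
    simpa using (hF (π - -(π / 2)) (π - π / 2)).comp_sub_left π
  rw [intervalIntegral.integral_add (hF _ _) hsub, intervalIntegral.integral_comp_sub_left,
    show π - π / 2 = π / 2 by ring,
    intervalIntegral.integral_add_adjacent_intervals (hF _ _) (hF _ _)]
  have h := hper.intervalIntegral_add_eq (-π) (-(π / 2))
  rwa [show -π + 2 * π = π by ring, show -(π / 2) + 2 * π = π - -(π / 2) by ring] at h

lemma integral_neg_self_eq_integral_cos_mul_comp_sin {k : ℝ → ℝ} (hk : Continuous k) (r : ℝ) :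
    ∫ y in -r..r, k y = r * ∫ θ in -(π / 2)..π / 2, cos θ * k (r * sin θ) := by
  have h := intervalIntegral.integral_comp_mul_deriv (a := -(π / 2)) (b := π / 2)
    (fun θ _ => (hasDerivAt_sin θ).const_mul r) (by fun_prop) hk
  simp only [Function.comp_apply, sin_neg, sin_pi_div_two, mul_neg, mul_one] at h
  rw [← h, ← intervalIntegral.integral_const_mul]
  congr 1 with θ
  ring

lemma measurable_sign : Measurable Real.sign :=
  Measurable.ite measurableSet_Iio measurable_const
    (Measurable.ite measurableSet_Ioi measurable_const measurable_const)

lemma abs_sign_le_one (t : ℝ) : |sign t| ≤ 1 := by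
  rcases sign_apply_eq t with h | h | h <;> simp [h]

lemma intervalIntegrable_sign_cos_mul {f : ℝ → ℝ} (hf : Continuous f) (a b : ℝ) :
    IntervalIntegrable (fun θ => sign (cos θ) * f θ) volume a b := by
  refine (hf.intervalIntegrable a b).mono_fun
    ((measurable_sign.comp measurable_cos).mul hf.measurable).aestronglyMeasurable
    (.of_forall fun θ => ?_)
  exact (norm_mul _ _).trans_le (mul_le_of_le_one_left (norm_nonneg _) (abs_sign_le_one _))

lemma hasDerivAt_mul_signedSqrt_cos (R : ℝ) {θ : ℝ} (hθ : cos θ ≠ 0) :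
    HasDerivAt (fun θ => R * signedSqrt (cos θ)) (R * (1 / (2 * √|cos θ|) * -sin θ)) θ :=
  ((hasDerivAt_signedSqrt hθ).comp θ (hasDerivAt_cos θ)).const_mul R

/- The substitution `x = R * signedSqrt (cos θ)` is singular at `θ = π / 2`, but `x dx` stays
bounded there. -/
lemma integral_neg_self_id_mul_eq_integral_comp_signedSqrt_cos {k : ℝ → ℝ} (hk : Continuous k)
    (R : ℝ) :
    ∫ x in -R..R, x * k x =
      R ^ 2 / 2 * ∫ θ in 0..π, sign (cos θ) * (sin θ * k (R * signedSqrt (cos θ))) := by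
  set H : ℝ → ℝ := fun x => ∫ t in 0..x, t * k t
  have hxk : Continuous fun x => x * k x := by fun_prop
  have hH (x : ℝ) : HasDerivAt H (x * k x) x := hxk.integral_hasStrictDerivAt 0 x |>.hasDerivAt
  have hHc : Continuous H := continuous_iff_continuousAt.2 fun x => (hH x).continuousAt
  have hderiv : ∀ θ ∈ Ioo 0 π \ {π / 2}, HasDerivAt (fun θ => H (R * signedSqrt (cos θ)))
      (-(R ^ 2 / 2) * (sign (cos θ) * (sin θ * k (R * signedSqrt (cos θ))))) θ := by
    rintro θ ⟨hθ, hne⟩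
    have hcos : cos θ ≠ 0 := fun h => hne <| injOn_cos (Ioo_subset_Icc_self hθ)
      ⟨by positivity, by linarith [pi_pos]⟩ (h.trans cos_pi_div_two.symm)
    have hsqrt : √|cos θ| ≠ 0 := by positivity
    refine ((hH _).comp θ (hasDerivAt_mul_signedSqrt_cos R hcos)).congr_deriv ?_
    set K := k (R * signedSqrt (cos θ))
    rw [signedSqrt_eq_sign_mul_sqrt_abs]
    field_simp
  have hint := integral_eq_of_hasDerivAt_off_countable_of_le _ _ pi_pos.le (countable_singleton _)
    (by fun_prop) hderiv
    ((intervalIntegrable_sign_cos_mul (by fun_prop) 0 π).const_mul (-(R ^ 2 / 2)))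
  have hsplit : H R - H (-R) = ∫ x in -R..R, x * k x :=
    intervalIntegral.integral_interval_sub_left (hxk.intervalIntegrable _ _)
      (hxk.intervalIntegrable _ _)
  rw [intervalIntegral.integral_const_mul, cos_pi, cos_zero, signedSqrt_neg,
    signedSqrt_of_nonneg zero_le_one, sqrt_one, mul_neg, mul_one] at hint
  linarith

end AngularSubstitution

section DivergenceTheorem

variable {R : ℝ} {a b : E2 → ℝ}

@[fun_prop]
lemma continuous_egScale (R : ℝ) : Continuous (egScale R) := by
  change Continuous fun q : E2 => (!₂[R * q 0, R ^ 2 * q 1] : E2)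
  fun_prop

lemma egScale_egCurve (R θ : ℝ) :
    egScale R (egCurve θ) = !₂[R * signedSqrt (cos θ), R ^ 2 / 2 * sin θ] := by
  ext i
  fin_cases i
  · rfl
  · simp [egScale, egCurve]; ring

lemma setIntegral_egBall_epX_eq_integral_sub (hR : 0 ≤ R) (ha : ContDiff ℝ 1 a) :
    ∫ p in egBall R, epX a p = ∫ y in -(R ^ 2 / 2)..R ^ 2 / 2,
      (a !₂[egBallWidth R y, y] - a !₂[-egBallWidth R y, y]) := by
  have hac := continuous_epX ha
  rw [setIntegral_egBall_eq_integral_horizontal hR hac]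
  congr 1 with y
  exact intervalIntegral.integral_eq_sub_of_hasDerivAt
    (fun x _ => hasDerivAt_epX (ha.differentiable one_ne_zero _))
    (Continuous.intervalIntegrable (by fun_prop) _ _)

lemma setIntegral_egBall_fst_mul_epY_eq_integral_sub (hR : 0 ≤ R) (hb : ContDiff ℝ 1 b) :
    ∫ p in egBall R, p 0 * epY b p = ∫ x in -R..R,
      x * (b !₂[x, egBallHeight R x] - b !₂[x, -egBallHeight R x]) := by
  have hbc := continuous_epY hb
  rw [setIntegral_egBall_eq_integral_vertical hR (by fun_prop)]
  congr 1 with x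
  simp only [Matrix.cons_val_zero]
  rw [intervalIntegral.integral_const_mul, intervalIntegral.integral_eq_sub_of_hasDerivAt
    (fun y _ => hasDerivAt_epY (hb.differentiable one_ne_zero _))
    (Continuous.intervalIntegrable (by fun_prop) _ _)]

lemma setIntegral_egBall_epX (hR : 0 ≤ R) (ha : ContDiff ℝ 1 a) :
    ∫ p in egBall R, epX a p = R ^ 2 / 2 * ∫ θ in -π..π, cos θ * a (egScale R (egCurve θ)) := by
  have hac := ha.continuous
  have hcont : Continuous fun θ => cos θ * a (egScale R (egCurve θ)) := by fun_prop
  have hper : Function.Periodic (fun θ => cos θ * a (egScale R (egCurve θ))) (2 * π) :=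
    cos_periodic.mul (periodic_egCurve.comp fun q => a (egScale R q))
  rw [setIntegral_egBall_epX_eq_integral_sub hR ha,
    integral_neg_self_eq_integral_cos_mul_comp_sin (by fun_prop),
    integral_neg_pi_pi_eq_integral_add_comp_pi_sub (fun _ _ => hcont.intervalIntegrable _ _) hper]
  congr 1
  refine intervalIntegral.integral_congr fun θ hθ => ?_
  rw [uIcc_of_le (by linarith [pi_pos])] at hθ
  simp only [egBallWidth_mul_sin hR (cos_nonneg_of_mem_Icc hθ), egScale_egCurve, cos_pi_sub,
    sin_pi_sub, signedSqrt_neg, mul_neg]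
  ring

lemma setIntegral_egBall_fst_mul_epY (hR : 0 ≤ R) (hb : ContDiff ℝ 1 b) :
    ∫ p in egBall R, p 0 * epY b p =
      R ^ 2 / 2 * ∫ θ in -π..π, sign (cos θ) * (sin θ * b (egScale R (egCurve θ))) := by
  have hbc := hb.continuous
  have hcont : Continuous fun θ => sin θ * b (egScale R (egCurve θ)) := by fun_prop
  rw [setIntegral_egBall_fst_mul_epY_eq_integral_sub hR hb,
    integral_neg_self_id_mul_eq_integral_comp_signedSqrt_cos (by fun_prop),
    integral_neg_pi_pi_eq_integral_add_comp_neg (intervalIntegrable_sign_cos_mul hcont)]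
  congr 1
  refine intervalIntegral.integral_congr fun θ hθ => ?_
  rw [uIcc_of_le pi_pos.le] at hθ
  simp only [egBallHeight_mul_signedSqrt_cos (sin_nonneg_of_mem_Icc hθ), egScale_egCurve, cos_neg,
    sin_neg, mul_neg]
  ring

lemma setIntegral_egBall_divergence (hR : 0 ≤ R) (ha : ContDiff ℝ 1 a) (hb : ContDiff ℝ 1 b) :
    ∫ p in egBall R, (epX a p + p 0 * epY b p) = R ^ 2 / 2 * ∫ θ in -π..π,
      (cos θ * a (egScale R (egCurve θ)) +
        sign (cos θ) * (sin θ * b (egScale R (egCurve θ)))) := by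
  have hac := ha.continuous
  have hbc := hb.continuous
  have hY : Continuous fun p => p 0 * epY b p := by
    have := continuous_epY hb
    fun_prop
  rw [integral_add (integrableOn_egBall hR (continuous_epX ha)) (integrableOn_egBall hR hY),
    setIntegral_egBall_epX hR ha, setIntegral_egBall_fst_mul_epY hR hb, ← mul_add,
    intervalIntegral.integral_add (Continuous.intervalIntegrable (by fun_prop) _ _)
      (intervalIntegrable_sign_cos_mul (by fun_prop) _ _)]

lemma abs_cos_mul_add_sign_cos_mul_le (θ a b : ℝ) :
    |cos θ * a + sign (cos θ) * (sin θ * b)| ≤ √(a ^ 2 + b ^ 2) := by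
  have hsign : sign (cos θ) ^ 2 ≤ 1 := (sq_le_one_iff_abs_le_one _).2 (abs_sign_le_one _)
  have hunit : cos θ ^ 2 + (sign (cos θ) * sin θ) ^ 2 ≤ 1 := by
    rw [mul_pow, ← cos_sq_add_sin_sq θ]
    gcongr
    exact mul_le_of_le_one_left (sq_nonneg _) hsign
  refine abs_le_sqrt ?_
  calc (cos θ * a + sign (cos θ) * (sin θ * b)) ^ 2
      ≤ (cos θ ^ 2 + (sign (cos θ) * sin θ) ^ 2) * (a ^ 2 + b ^ 2) := by
        linarith [sq_nonneg (cos θ * b - sign (cos θ) * sin θ * a)]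
    _ ≤ a ^ 2 + b ^ 2 := mul_le_of_le_one_left (by positivity) hunit

lemma abs_setIntegral_egBall_divergence_le (hR : 0 ≤ R) (ha : ContDiff ℝ 1 a)
    (hb : ContDiff ℝ 1 b) :
    |∫ p in egBall R, (epX a p + p 0 * epY b p)| ≤
      R ^ 2 * ∫ q in egSphere, √(a (egScale R q) ^ 2 + b (egScale R q) ^ 2) ∂μH[1] := by
  set N : E2 → ℝ := fun q => √(a (egScale R q) ^ 2 + b (egScale R q) ^ 2)
  have hN : Continuous N := by
    have hac := ha.continuous
    have hbc := hb.continuous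
    fun_prop
  calc |∫ p in egBall R, (epX a p + p 0 * epY b p)|
      = R ^ 2 / 2 * |∫ θ in -π..π, (cos θ * a (egScale R (egCurve θ)) +
          sign (cos θ) * (sin θ * b (egScale R (egCurve θ))))| := by
        rw [setIntegral_egBall_divergence hR ha hb, abs_mul, abs_of_nonneg (by positivity)]
    _ ≤ R ^ 2 / 2 * ∫ θ in -π..π, N (egCurve θ) := by
        gcongr
        rw [← Real.norm_eq_abs]
        refine intervalIntegral.norm_integral_le_of_norm_le (by linarith [pi_pos])
          (.of_forall fun θ _ => ?_) ((hN.comp continuous_egCurve).intervalIntegrable _ _)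
        exact abs_cos_mul_add_sign_cos_mul_le θ _ _
    _ = R ^ 2 * (1 / 2 * ∫ θ in -π..π, N (egCurve θ)) := by ring
    _ ≤ R ^ 2 * ∫ q in egSphere, N q ∂μH[1] := by
        gcongr
        exact half_mul_integral_egCurve_le hN fun q => sqrt_nonneg _

end DivergenceTheorem

lemma epX_mul_epX_add_fst_mul_epY {u v : E2 → ℝ} (hu : ContDiff ℝ 2 u) (hv : Differentiable ℝ v)
    (p : E2) :
    epX (fun p => v p * epX u p) p + p 0 * epY (fun p => p 0 * (v p * epY u p)) p =
      epX u p * epX v p + p 0 ^ 2 * epY u p * epY v p + v p * egLap u p := by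
  have hX := (contDiff_epX hu).differentiable one_ne_zero
  have hY := (contDiff_epY hu).differentiable one_ne_zero
  rw [epX_mul (hv p) (hX p),
    epY_mul (u := fun p => p 0) (v := fun p => v p * epY u p) (by fun_prop) ((hv p).fun_mul (hY p)),
    epY_mul (hv p) (hY p), epY_apply_zero, egLap, epXX, epYY]
  change v p * epX (epX u) p + _ + p 0 * (p 0 * (v p * epY (epY u) p + _) + _) =
    _ + v p * (epX (epX u) p + p 0 ^ 2 * epY (epY u) p)
  ring

theorem grushin_integration_by_parts_general (u v : E2 → ℝ) (hu : ContDiff ℝ 2 u)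
    (hv : ContDiff ℝ 1 v) (R : ℝ) (hR : 0 ≤ R) (K : ℝ)
    (hK : ∀ q ∈ egSphere, √(egGradSq u (egScale R q)) ≤ K) :
    |∫ p in egBall R, (epX u p * epX v p + p 0 ^ 2 * epY u p * epY v p + v p * egLap u p)| ≤
      R ^ 2 * K * ∫ q in egSphere, |v (egScale R q)| ∂μH[1] := by
  set a : E2 → ℝ := fun p => v p * epX u p
  set b : E2 → ℝ := fun p => p 0 * (v p * epY u p)
  have ha : ContDiff ℝ 1 a := hv.mul (contDiff_epX hu)
  have hb : ContDiff ℝ 1 b := ContDiff.mul (by fun_prop) (hv.mul (contDiff_epY hu))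
  have hab (p : E2) : √(a p ^ 2 + b p ^ 2) = |v p| * √(egGradSq u p) := by
    rw [← sqrt_sq_eq_abs, ← sqrt_mul (sq_nonneg _), egGradSq]
    congr 1
    ring
  calc |∫ p in egBall R, (epX u p * epX v p + p 0 ^ 2 * epY u p * epY v p + v p * egLap u p)|
      = |∫ p in egBall R, (epX a p + p 0 * epY b p)| := by
        simp only [a, b, epX_mul_epX_add_fst_mul_epY hu (hv.differentiable one_ne_zero)]
    _ ≤ R ^ 2 * ∫ q in egSphere, √(a (egScale R q) ^ 2 + b (egScale R q) ^ 2) ∂μH[1] :=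
        abs_setIntegral_egBall_divergence_le hR ha hb
    _ ≤ R ^ 2 * ∫ q in egSphere, K * |v (egScale R q)| ∂μH[1] := by
        have hac := ha.continuous
        have hbc := hb.continuous
        have hvc := hv.continuous
        gcongr ?_ * ?_
        refine setIntegral_mono_on (integrableOn_egSphere (by fun_prop))
          (integrableOn_egSphere (by fun_prop)) isCompact_egSphere.measurableSet fun q hq => ?_
        rw [hab, mul_comm]
        gcongr
        exact hK q hq
    _ = R ^ 2 * K * ∫ q in egSphere, |v (egScale R q)| ∂μH[1] := by
        rw [integral_const_mul, mul_assoc]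

/-- the integration-by-parts inequality (Lemma 2.1 of the paper): for
`u ∈ C²` with `|∇_G u| ≤ K` everywhere and `v ∈ C¹` with `v ≥ 0`,
`∫_{B_R(0)} (⟨∇_G u, ∇_G v⟩ + v Δ_G u) ≥ −R² K ∫_{∂B₁(0)} v(RX, R²Y) dH¹(X,Y)`. -/
theorem grushin_integration_by_parts (u v : E2 → ℝ) (hu : ContDiff ℝ 2 u)
    (hv : ContDiff ℝ 1 v) (hvpos : ∀ p : E2, 0 ≤ v p)
    (K : ℝ) (hK : ∀ p : E2, Real.sqrt (egGradSq u p) ≤ K)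
    (R : ℝ) (hR : 0 < R) :
    -(R ^ 2 * K * ∫ q in egSphere, v (egScale R q) ∂μH[1]) ≤
      ∫ p in egBall R,
        (epX u p * epX v p + (p 0) ^ 2 * epY u p * epY v p + v p * egLap u p) := by
  have h := grushin_integration_by_parts_general u v hu hv R hR.le K fun q _ => hK (egScale R q)
  simpa only [abs_of_nonneg (hvpos _)] using neg_le_of_abs_le h
end

section
/- Let u ∈ C²(ℝ², [−1,1]) with |∇_G u| ∈ L^∞(ℝ²) solve Δ_G u = W'(u) in all of ℝ², and assume ∂_y u(ζ) > 0 for every ζ ∈ ℝ². Then there exists a constant C > 0, depending only on W and on ‖∇_G u‖_{L^∞(ℝ²)}, such that for every R > 0, ∫_{B_R(0)} ( |∇_G u|²/2 + W(u) ) dx dy ≤ C R². As a consequence, ∫_{B_R(0)} x² |∇_G u|² dx dy ≤ 2C R⁴ for every R > 0. -/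
open MeasureTheory

/-- A double-well potential as in the paper: `W ∈ C²`, even, `W(±1) = 0 ≤ W`,
`W''(0) ≠ 0`, `W''(±1) ≠ 0`, and `W'(s) = 0` iff `s ∈ {−1, 0, +1}`. -/
def DoubleWell (W : ℝ → ℝ) : Prop :=
  ContDiff ℝ 2 W ∧ (∀ r : ℝ, W (-r) = W r) ∧ W 1 = 0 ∧ W (-1) = 0 ∧ (∀ r : ℝ, 0 ≤ W r) ∧
    deriv (deriv W) 0 ≠ 0 ∧ deriv (deriv W) 1 ≠ 0 ∧ deriv (deriv W) (-1) ≠ 0 ∧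
    (∀ s : ℝ, deriv W s = 0 ↔ s = -1 ∨ s = 0 ∨ s = 1)

/-- Partial derivative in `x`. -/
noncomputable def pX (u : ℝ × ℝ → ℝ) (p : ℝ × ℝ) : ℝ := deriv (fun x => u (x, p.2)) p.1

/-- Partial derivative in `y`. -/
noncomputable def pY (u : ℝ × ℝ → ℝ) (p : ℝ × ℝ) : ℝ := deriv (fun y => u (p.1, y)) p.2

/-- Second partial derivative in `x`. -/
noncomputable def pXX (u : ℝ × ℝ → ℝ) (p : ℝ × ℝ) : ℝ :=
  deriv (deriv (fun x => u (x, p.2))) p.1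

/-- Second partial derivative in `y`. -/
noncomputable def pYY (u : ℝ × ℝ → ℝ) (p : ℝ × ℝ) : ℝ :=
  deriv (deriv (fun y => u (p.1, y))) p.2

/-- The Grushin Laplacian `Δ_G u = ∂_xx u + x² ∂_yy u`. -/
noncomputable def grushinLap (u : ℝ × ℝ → ℝ) (p : ℝ × ℝ) : ℝ := pXX u p + p.1 ^ 2 * pYY u p

/-- The squared length of the Grushin gradient: `|∇_G u|² = (∂_x u)² + x² (∂_y u)²`. -/
noncomputable def grushinGradSq (u : ℝ × ℝ → ℝ) (p : ℝ × ℝ) : ℝ :=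
  (pX u p) ^ 2 + p.1 ^ 2 * (pY u p) ^ 2

/-- The Grushin norm `‖(x,y)‖ = (x⁴ + 4y²)^(1/4)`. -/
noncomputable def gNorm (p : ℝ × ℝ) : ℝ := (p.1 ^ 4 + 4 * p.2 ^ 2) ^ ((1 : ℝ) / 4)

/-- The Grushin ball of radius `R` centered at `c`. -/
def gBall (c : ℝ × ℝ) (R : ℝ) : Set (ℝ × ℝ) := {p | gNorm (p - c) < R}

/-!
Read as an evolution in `y`, the equation `Δ_G u = W'(u)` is Hamiltonian: the integral over
`a ≤ x ≤ b` of `u_x² / 2 - x² u_y² / 2 + W(u)` has `y`-derivative `[u_x u_y]` between `x = a` and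
`x = b`. As `|u_x| ≤ K` and `u_y > 0` has integral at most `2` on vertical lines, this slice
integral varies by at most `4K`. Where `|x| ≤ R`, the remainder `x² u_y² ≤ K R u_y` of the energy is
controlled in the same way, so it suffices to bound the Hamiltonian of one slice independently of
`a` and `b`.

For that, `|∇_G u|² / 2 + W(u) = Δ_G(u²) / 4 + W(u) - u W'(u) / 2`. Let `y → ±∞`: by monotonicity
the slices of `u` converge to profiles `v` solving `v'' = W'(v)`, the `∂_yy` term disappears, and
the Hamiltonian is at most `5K` plus the integral of `W(v) - v W'(v) / 2`. The lower and the upper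
profile are strictly ordered, which is impossible if both first integrals `v'² / 2 - W(v)` are
negative: each of them would be smaller than the other, since the lower profile has a critical value
to the right of the interior critical point of `W`, where `W` decreases, and symmetrically for the
upper one. Hence `v'² = 2 W(v)` for one of the profiles, which is then monotone, and its integral is
at most `3K`.
-/

open Filter Topology Set

section Calculus

variable {f f' g : ℝ → ℝ} {a b : ℝ}

theorem exists_tendsto_deriv_zero {l : ℝ} (hf : ∀ x, HasDerivAt f (f' x) x)
    (hl : Tendsto f atTop (𝓝 l)) :
    ∃ c : ℕ → ℝ, Tendsto c atTop atTop ∧ Tendsto (fun n => f' (c n)) atTop (𝓝 0) := by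
  have mean_value : ∀ n : ℕ, ∃ c ∈ Ioo (n : ℝ) (n + 1), f' c = f (n + 1) - f n := fun n => by
    obtain ⟨c, hc, h⟩ := exists_hasDerivAt_eq_slope f f' (lt_add_one (n : ℝ))
      (fun x _ => (hf x).continuousAt.continuousWithinAt) (fun x _ => hf x)
    exact ⟨c, hc, by rw [h, add_sub_cancel_left, div_one]⟩
  choose c hc hslope using mean_value
  have hcast : Tendsto (fun n : ℕ => (n : ℝ)) atTop atTop := tendsto_natCast_atTop_atTop
  refine ⟨c, tendsto_atTop_mono (fun n => (hc n).1.le) hcast, ?_⟩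
  simp only [hslope]
  simpa using (hl.comp (tendsto_atTop_add_const_right _ 1 hcast)).sub (hl.comp hcast)

theorem exists_tendsto_of_deriv_nonneg {B x₀ : ℝ} (hf : ∀ x, HasDerivAt f (f' x) x)
    (hB : ∀ x, f x ≤ B) (hpos : ∀ x > x₀, 0 ≤ f' x) : ∃ l, Tendsto f atTop (𝓝 l) := by
  have hmono : MonotoneOn f (Ici x₀) :=
    monotoneOn_of_hasDerivWithinAt_nonneg (convex_Ici x₀)
      (fun x _ => (hf x).continuousAt.continuousWithinAt) (fun x _ => (hf x).hasDerivWithinAt)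
      (fun x hx => hpos x (by simpa using hx))
  have hmono' : Monotone fun x => f (max x x₀) := fun x y hxy =>
    hmono (mem_Ici.2 (le_max_right _ _)) (mem_Ici.2 (le_max_right _ _)) (max_le_max_right x₀ hxy)
  refine ⟨_, (tendsto_atTop_ciSup hmono' ⟨B, ?_⟩).congr' ?_⟩
  · rintro _ ⟨x, rfl⟩
    exact hB _
  · filter_upwards [eventually_ge_atTop x₀] with x hx
    rw [max_eq_left hx]

theorem exists_tendsto_of_deriv_ne_zero {B x₀ : ℝ} (hf : ∀ x, HasDerivAt f (f' x) x)
    (hB : ∀ x, |f x| ≤ B) (hne : ∀ x > x₀, f' x ≠ 0) : ∃ l, Tendsto f atTop (𝓝 l) := by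
  rcases hasDerivWithinAt_forall_lt_or_forall_gt_of_forall_ne (convex_Ioi x₀)
    (fun x _ => (hf x).hasDerivWithinAt) hne with hneg | hpos
  · obtain ⟨l, hl⟩ := exists_tendsto_of_deriv_nonneg (fun x => (hf x).neg)
      (fun x => (neg_le_abs _).trans (hB x)) (fun x hx => neg_nonneg.2 (hneg x hx).le)
    exact ⟨-l, by simpa using hl.neg⟩
  · exact exists_tendsto_of_deriv_nonneg hf (fun x => (le_abs_self _).trans (hB x))
      (fun x hx => (hpos x hx).le)

theorem abs_integral_mul_deriv_le {K : ℝ} (hab : a ≤ b) (hf : ∀ x, HasDerivAt f (f' x) x)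
    (hf' : Continuous f') (hpos : ∀ x, 0 ≤ f' x) (hg : ∀ x ∈ Ioc a b, |g x| ≤ K) :
    |∫ x in a..b, g x * f' x| ≤ K * (f b - f a) := by
  have hint := hf'.intervalIntegrable (μ := volume) a b
  calc |∫ x in a..b, g x * f' x| ≤ ∫ x in a..b, K * f' x := by
        rw [← Real.norm_eq_abs]
        refine intervalIntegral.norm_integral_le_of_norm_le hab
          (.of_forall fun x hx => ?_) (hint.const_mul K)
        rw [Real.norm_eq_abs, abs_mul, abs_of_nonneg (hpos x)]
        exact mul_le_mul_of_nonneg_right (hg x hx) (hpos x)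
    _ = K * (f b - f a) := by
        rw [intervalIntegral.integral_const_mul,
          intervalIntegral.integral_eq_sub_of_hasDerivAt (fun x _ => hf x) hint]

theorem hasDerivAt_intervalIntegral {F F' : ℝ → ℝ → ℝ} (hF : ∀ x, Continuous (F x))
    (hF' : Continuous fun p : ℝ × ℝ => F' p.1 p.2)
    (hderiv : ∀ x s, HasDerivAt (fun x => F x s) (F' x s) x) (a b x : ℝ) :
    HasDerivAt (fun x => ∫ s in a..b, F x s) (∫ s in a..b, F' x s) x := by
  obtain ⟨B, hB⟩ := ((isCompact_Icc (a := x - 1) (b := x + 1)).prod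
    (isCompact_uIcc (a := a) (b := b))).exists_bound_of_continuousOn hF'.continuousOn
  have hF'x : Continuous (F' x) := hF'.comp (Continuous.prodMk_right x)
  refine (intervalIntegral.hasDerivAt_integral_of_dominated_loc_of_deriv_le
    (bound := fun _ => B) (Icc_mem_nhds (sub_one_lt x) (lt_add_one x))
    (.of_forall fun y => (hF y).aestronglyMeasurable) ((hF x).intervalIntegrable a b)
    hF'x.aestronglyMeasurable (ae_of_all _ fun s hs y hy => ?_) intervalIntegrable_const
    (ae_of_all _ fun s _ y _ => hderiv y s)).2
  exact hB (y, s) ⟨hy, uIoc_subset_uIcc hs⟩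

end Calculus

section Limits

theorem continuous_of_tendsto_of_abs_deriv_le {f f' : ℕ → ℝ → ℝ} {v : ℝ → ℝ} {K : ℝ}
    (hf : ∀ n x, HasDerivAt (f n) (f' n x) x) (hK : ∀ n x, |f' n x| ≤ K)
    (hv : ∀ x, Tendsto (fun n => f n x) atTop (𝓝 (v x))) : Continuous v := by
  have hK₀ : 0 ≤ K := (abs_nonneg _).trans (hK 0 0)
  have hlip : ∀ n, LipschitzWith ⟨K, hK₀⟩ (f n) := fun n =>
    lipschitzWith_of_nnnorm_deriv_le (fun x => (hf n x).differentiableAt)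
      (fun x => by rw [(hf n x).deriv]; exact hK n x)
  exact ((isClosed_setOfPred_lipschitzWith ⟨K, hK₀⟩).mem_of_tendsto (tendsto_pi_nhds.2 hv)
    (.of_forall hlip)).continuous

theorem tendsto_intervalIntegral_of_abs_le {f : ℕ → ℝ → ℝ} {g B : ℝ → ℝ}
    (hf : ∀ n, Continuous (f n)) (hB : Continuous B) (hfB : ∀ n x, |f n x| ≤ B x)
    (hg : ∀ x, Tendsto (fun n => f n x) atTop (𝓝 (g x))) (a b : ℝ) :
    Tendsto (fun n => ∫ x in a..b, f n x) atTop (𝓝 (∫ x in a..b, g x)) :=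
  intervalIntegral.tendsto_integral_filter_of_dominated_convergence B
    (.of_forall fun n => (hf n).aestronglyMeasurable)
    (.of_forall fun n => .of_forall fun x _ => hfB n x)
    (hB.intervalIntegrable a b) (.of_forall fun x _ => hg x)

theorem hasDerivAt_of_tendsto_of_abs_le {f f' : ℕ → ℝ → ℝ} {v v' B : ℝ → ℝ}
    (hf : ∀ n x, HasDerivAt (f n) (f' n x) x) (hf' : ∀ n, Continuous (f' n))
    (hB : Continuous B) (hfB : ∀ n x, |f' n x| ≤ B x) (hv' : Continuous v')
    (hlim : ∀ x, Tendsto (fun n => f n x) atTop (𝓝 (v x)))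
    (hlim' : ∀ x, Tendsto (fun n => f' n x) atTop (𝓝 (v' x))) (x : ℝ) :
    HasDerivAt v (v' x) x := by
  have hint : ∀ y, v y = v 0 + ∫ s in (0 : ℝ)..y, v' s := fun y => by
    refine tendsto_nhds_unique (hlim y) (((hlim 0).add
      (tendsto_intervalIntegral_of_abs_le hf' hB hfB hlim' 0 y)).congr fun n => ?_)
    rw [intervalIntegral.integral_eq_sub_of_hasDerivAt (fun s _ => hf n s)
      ((hf' n).intervalIntegrable 0 y), add_sub_cancel]
  rw [funext hint]
  exact (hv'.integral_hasStrictDerivAt 0 x).hasDerivAt.const_add _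

theorem exists_hasDerivAt_of_tendsto_of_abs_le {f f' f'' : ℕ → ℝ → ℝ} {v g B : ℝ → ℝ} {K : ℝ}
    (hf : ∀ n x, HasDerivAt (f n) (f' n x) x) (hf' : ∀ n x, HasDerivAt (f' n) (f'' n x) x)
    (hf'' : ∀ n, Continuous (f'' n)) (hK : ∀ n x, |f' n x| ≤ K) (hB : Continuous B)
    (hfB : ∀ n x, |f'' n x| ≤ B x) (hg : Continuous g)
    (hlim : ∀ x, Tendsto (fun n => f n x) atTop (𝓝 (v x)))
    (hlim'' : ∀ x, Tendsto (fun n => f'' n x) atTop (𝓝 (g x))) :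
    ∃ v', (∀ x, HasDerivAt v (v' x) x) ∧ (∀ x, HasDerivAt v' (g x) x) ∧ ∀ x, |v' x| ≤ K := by
  obtain ⟨D, -, φ, hφ, hD⟩ := tendsto_subseq_of_bounded (Metric.isBounded_Icc (-K) K)
    (fun n => abs_le.1 (hK n 0))
  set v' : ℝ → ℝ := fun x => D + ∫ s in (0 : ℝ)..x, g s
  have hv' : ∀ x, HasDerivAt v' (g x) x := fun x =>
    (hg.integral_hasStrictDerivAt 0 x).hasDerivAt.const_add D
  have hlim' : ∀ x, Tendsto (fun n => f' (φ n) x) atTop (𝓝 (v' x)) := fun x => by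
    refine (hD.add ((tendsto_intervalIntegral_of_abs_le hf'' hB hfB hlim'' 0 x).comp
      hφ.tendsto_atTop)).congr fun n => ?_
    simp only [Function.comp_apply]
    rw [intervalIntegral.integral_eq_sub_of_hasDerivAt (fun s _ => hf' (φ n) s)
      ((hf'' _).intervalIntegrable 0 x), add_sub_cancel]
  refine ⟨v', hasDerivAt_of_tendsto_of_abs_le (fun n => hf (φ n))
    (fun n => continuous_iff_continuousAt.2 fun x => (hf' (φ n) x).continuousAt)
    continuous_const (fun n => hK (φ n))
    (continuous_iff_continuousAt.2 fun x => (hv' x).continuousAt)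
    (fun x => (hlim x).comp hφ.tendsto_atTop) hlim', hv', fun x => ?_⟩
  exact le_of_tendsto (hlim' x).abs (.of_forall fun n => hK (φ n) x)

end Limits

/-! ### Bounded solutions of the one-dimensional equation -/

/-- A `C²` potential on the line with zero-height wells at `±1` whose only critical point in between
is `θ`. A double-well potential is of this kind with `θ = 0`. Leaving the critical point free, and
not asking for evenness, keeps the class stable under `s ↦ -s`, so that one-sided arguments can be
reflected. -/
structure IsBistable (W : ℝ → ℝ) (θ : ℝ) : Prop where
  contDiff : ContDiff ℝ 2 W
  nonneg : ∀ s, 0 ≤ W s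
  map_neg_one : W (-1) = 0
  map_one : W 1 = 0
  eq_of_deriv_eq_zero : ∀ s ∈ Ioo (-1 : ℝ) 1, deriv W s = 0 → s = θ

theorem DoubleWell.isBistable {W : ℝ → ℝ} (hW : DoubleWell W) : IsBistable W 0 := by
  obtain ⟨hC2, -, hone, hneg_one, hnonneg, -, -, -, hcrit⟩ := hW
  refine ⟨hC2, hnonneg, hneg_one, hone, fun s hs h => ?_⟩
  rcases (hcrit s).1 h with rfl | rfl | rfl
  · exact absurd hs.1 (lt_irrefl _)
  · rfl
  · exact absurd hs.2 (lt_irrefl _)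

namespace IsBistable

variable {W : ℝ → ℝ} {θ : ℝ}

theorem reflect (hW : IsBistable W θ) : IsBistable (fun s => W (-s)) (-θ) where
  contDiff := hW.contDiff.comp contDiff_neg
  nonneg s := hW.nonneg (-s)
  map_neg_one := by rw [neg_neg, hW.map_one]
  map_one := hW.map_neg_one
  eq_of_deriv_eq_zero s hs h := by
    rw [deriv_comp_neg, neg_eq_zero] at h
    rw [← hW.eq_of_deriv_eq_zero (-s) ⟨neg_lt_neg hs.2, neg_lt.1 hs.1⟩ h, neg_neg]

theorem hasDerivAt (hW : IsBistable W θ) (s : ℝ) : HasDerivAt W (deriv W s) s :=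
  (hW.contDiff.differentiable two_ne_zero s).hasDerivAt

theorem contDiff_deriv (hW : IsBistable W θ) : ContDiff ℝ 1 (deriv W) :=
  (contDiff_succ_iff_deriv (n := 1).1 hW.contDiff).2.2

theorem mem_Ioo (hW : IsBistable W θ) : θ ∈ Ioo (-1 : ℝ) 1 := by
  obtain ⟨c, hc, hc'⟩ := exists_deriv_eq_zero (neg_one_lt_zero.trans one_pos)
    hW.contDiff.continuous.continuousOn (hW.map_neg_one.trans hW.map_one.symm)
  exact hW.eq_of_deriv_eq_zero c hc hc' ▸ hc

theorem strictAntiOn (hW : IsBistable W θ) : StrictAntiOn W (Icc θ 1) := by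
  have hcont := hW.contDiff.continuous
  refine hcont.continuousOn.strictAntiOn_of_injOn_Icc hW.mem_Ioo.2.le
    (hW.map_one.trans_le (hW.nonneg θ)) ?_
  intro s hs t ht hst
  by_contra hne
  wlog hlt : s < t generalizing s t
  · exact this ht hs hst.symm (Ne.symm hne) (lt_of_le_of_ne (not_lt.1 hlt) (Ne.symm hne))
  obtain ⟨c, hc, hc'⟩ := exists_deriv_eq_zero hlt hcont.continuousOn hst
  have hθc : θ < c := hs.1.trans_lt hc.1
  exact hθc.ne' (hW.eq_of_deriv_eq_zero c
    ⟨hW.mem_Ioo.1.trans hθc, hc.2.trans_le ht.2⟩ hc')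

theorem strictMonoOn (hW : IsBistable W θ) : StrictMonoOn W (Icc (-1) θ) := fun s hs t ht hst => by
  simpa only [neg_neg] using hW.reflect.strictAntiOn ⟨neg_le_neg ht.2, neg_le.1 ht.1⟩
    ⟨neg_le_neg hs.2, neg_le.1 hs.1⟩ (neg_lt_neg hst)

theorem mem_Ioo_of_pos (hW : IsBistable W θ) {s : ℝ} (hs : |s| ≤ 1) (h : 0 < W s) :
    s ∈ Ioo (-1 : ℝ) 1 := by
  obtain ⟨hl, hr⟩ := abs_le.1 hs
  refine ⟨lt_of_le_of_ne hl ?_, lt_of_le_of_ne hr ?_⟩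
  · rintro rfl
    exact h.ne' hW.map_neg_one
  · rintro rfl
    exact h.ne' hW.map_one

theorem eq_of_le (hW : IsBistable W θ) {s : ℝ} (hs : |s| ≤ 1) (h : W θ ≤ W s) : s = θ := by
  obtain ⟨hl, hr⟩ := abs_le.1 hs
  rcases lt_trichotomy s θ with hlt | heq | hgt
  · exact absurd (hW.strictMonoOn ⟨hl, hlt.le⟩ ⟨hW.mem_Ioo.1.le, le_rfl⟩ hlt) h.not_gt
  · exact heq
  · exact absurd (hW.strictAntiOn ⟨le_rfl, hW.mem_Ioo.2.le⟩ ⟨hgt.le, hr⟩ hgt) h.not_gt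

theorem deriv_eq_zero_of_map_eq_zero (hW : IsBistable W θ) {s : ℝ} (h : W s = 0) :
    deriv W s = 0 :=
  IsLocalMin.deriv_eq_zero (.of_forall fun t => h.trans_le (hW.nonneg t))

end IsBistable

/-- A solution `v` of `v'' = W'(v)` on the whole line with values in `[-1, 1]`, together with its
derivative `v'`. -/
structure IsBoundedSolution (W v v' : ℝ → ℝ) : Prop where
  hasDerivAt : ∀ x, HasDerivAt v (v' x) x
  hasDerivAt_deriv : ∀ x, HasDerivAt v' (deriv W (v x)) x
  abs_le_one : ∀ x, |v x| ≤ 1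

namespace IsBoundedSolution

variable {W v v' w w' : ℝ → ℝ} {θ c d : ℝ}

theorem reflect (hv : IsBoundedSolution W v v') :
    IsBoundedSolution (fun s => W (-s)) (-v) (-v') where
  hasDerivAt x := (hv.hasDerivAt x).neg
  hasDerivAt_deriv x := by
    simpa only [deriv_comp_neg, Pi.neg_apply, neg_neg] using (hv.hasDerivAt_deriv x).neg
  abs_le_one x := by simpa only [Pi.neg_apply, abs_neg] using hv.abs_le_one x

theorem continuous (hv : IsBoundedSolution W v v') : Continuous v :=
  continuous_iff_continuousAt.2 fun x => (hv.hasDerivAt x).continuousAt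

theorem continuous_deriv (hv : IsBoundedSolution W v v') : Continuous v' :=
  continuous_iff_continuousAt.2 fun x => (hv.hasDerivAt_deriv x).continuousAt

theorem exists_first_integral (hv : IsBoundedSolution W v v') (hW : IsBistable W θ) :
    ∃ c, ∀ x, v' x ^ 2 / 2 - W (v x) = c := by
  have hderiv : ∀ x, HasDerivAt (fun x => v' x ^ 2 / 2 - W (v x)) 0 x := fun x =>
    ((((hv.hasDerivAt_deriv x).pow 2).div_const 2).sub
      ((hW.hasDerivAt (v x)).comp x (hv.hasDerivAt x))).congr_deriv (by push_cast; ring)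
  exact ⟨_, fun x => is_const_of_deriv_eq_zero (fun x => (hderiv x).differentiableAt)
    (fun x => (hderiv x).deriv) x 0⟩

theorem exists_limit (hv : IsBoundedSolution W v v') (hW : IsBistable W θ)
    (hc : ∀ x, v' x ^ 2 / 2 - W (v x) = c) {x₀ : ℝ} (hne : ∀ x > x₀, v' x ≠ 0) :
    ∃ l, |l| ≤ 1 ∧ W l = -c ∧ deriv W l = 0 := by
  obtain ⟨l, hl⟩ := exists_tendsto_of_deriv_ne_zero hv.hasDerivAt hv.abs_le_one hne
  have hWl : Tendsto (fun x => W (v x)) atTop (𝓝 (W l)) :=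
    (hW.contDiff.continuous.tendsto l).comp hl
  have hsq : ∀ x, v' x ^ 2 = 2 * (c + W (v x)) := fun x => by linarith [hc x]
  have hl_eq : W l = -c := by
    obtain ⟨t, ht, ht'⟩ := exists_tendsto_deriv_zero hv.hasDerivAt hl
    have h := tendsto_nhds_unique ((ht'.pow 2).congr fun n => hsq (t n))
      (((hWl.comp ht).const_add c).const_mul 2)
    linarith
  have hv'_zero : Tendsto v' atTop (𝓝 0) := by
    have h : Tendsto (fun x => v' x ^ 2) atTop (𝓝 0) := by
      simpa [hsq, hl_eq] using (hWl.const_add c).const_mul 2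
    rw [tendsto_zero_iff_abs_tendsto_zero]
    simpa [Function.comp_def, Real.sqrt_sq_eq_abs] using h.sqrt
  refine ⟨l, le_of_tendsto hl.abs (.of_forall hv.abs_le_one), hl_eq, ?_⟩
  obtain ⟨t, ht, ht'⟩ := exists_tendsto_deriv_zero hv.hasDerivAt_deriv hv'_zero
  exact tendsto_nhds_unique
    (((hW.contDiff_deriv.continuous.tendsto l).comp hl).comp ht) ht'

theorem first_integral_nonpos (hv : IsBoundedSolution W v v') (hW : IsBistable W θ)
    (hc : ∀ x, v' x ^ 2 / 2 - W (v x) = c) : c ≤ 0 := by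
  by_contra! hpos
  have hne : ∀ x > (0 : ℝ), v' x ≠ 0 := fun x _ h => by
    have := hc x
    rw [h] at this
    linarith [hW.nonneg (v x)]
  obtain ⟨l, -, hWl, -⟩ := hv.exists_limit hW hc hne
  linarith [hW.nonneg l]

theorem exists_critical_ge_of_lt (hv : IsBoundedSolution W v v') (hW : IsBistable W θ)
    (hpos : ∀ x, 0 < W (v x)) {a b : ℝ} (hab : a < b) (ha : v' a = 0) (hb : v' b = 0) :
    ∃ p, v' p = 0 ∧ θ ≤ v p := by
  obtain ⟨x, hx, hcrit⟩ := exists_hasDerivAt_eq_zero hab hv.continuous_deriv.continuousOn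
    (ha.trans hb.symm) (fun x _ => hv.hasDerivAt_deriv x)
  have hvx : v x = θ :=
    hW.eq_of_deriv_eq_zero _ (hW.mem_Ioo_of_pos (hv.abs_le_one x) (hpos x)) hcrit
  obtain ⟨m, hm, hmax⟩ := isCompact_Icc.exists_isMaxOn (nonempty_Icc.2 hab.le)
    hv.continuous.continuousOn
  refine ⟨m, ?_, hvx ▸ hmax (Ioo_subset_Icc_self hx)⟩
  rcases eq_or_ne m a with rfl | hma
  · exact ha
  rcases eq_or_ne m b with rfl | hmb
  · exact hb
  exact (hmax.isLocalMax (Icc_mem_nhds (lt_of_le_of_ne hm.1 hma.symm)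
    (lt_of_le_of_ne hm.2 hmb))).hasDerivAt_eq_zero (hv.hasDerivAt m)

theorem exists_critical_ge (hv : IsBoundedSolution W v v') (hW : IsBistable W θ)
    (hc : ∀ x, v' x ^ 2 / 2 - W (v x) = c) (hneg : c < 0) : ∃ p, v' p = 0 ∧ θ ≤ v p := by
  have hge : ∀ x, -c ≤ W (v x) := fun x => by linarith [hc x, sq_nonneg (v' x)]
  have hpos : ∀ x, 0 < W (v x) := fun x => (neg_pos.2 hneg).trans_le (hge x)
  by_cases htwo : ∃ a b, a < b ∧ v' a = 0 ∧ v' b = 0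
  · obtain ⟨a, b, hab, ha, hb⟩ := htwo
    exact hv.exists_critical_ge_of_lt hW hpos hab ha hb
  push Not at htwo
  have hray : ∃ x₀, ∀ x > x₀, v' x ≠ 0 := by
    by_cases hzero : ∃ a, v' a = 0
    · obtain ⟨a, ha⟩ := hzero
      exact ⟨a, fun x hx => htwo a x hx ha⟩
    · exact ⟨0, fun x _ => not_exists.1 hzero x⟩
  obtain ⟨x₀, hx₀⟩ := hray
  obtain ⟨l, hl, hWl, hcrit⟩ := hv.exists_limit hW hc hx₀
  have hlθ : l = θ :=
    hW.eq_of_deriv_eq_zero l (hW.mem_Ioo_of_pos hl (by linarith)) hcrit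
  have hv₀ : v 0 = θ :=
    hW.eq_of_le (hv.abs_le_one 0) (by rw [← hlθ, hWl]; exact hge 0)
  refine ⟨0, ?_, hv₀.ge⟩
  have h := hc 0
  rw [hv₀, ← hlθ, hWl] at h
  exact pow_eq_zero_iff two_ne_zero |>.1 (by linarith)

theorem first_integral_lt_of_lt (hv : IsBoundedSolution W v v') (hw : IsBoundedSolution W w w')
    (hW : IsBistable W θ) (hlt : ∀ x, v x < w x) (hc : ∀ x, v' x ^ 2 / 2 - W (v x) = c)
    (hd : ∀ x, w' x ^ 2 / 2 - W (w x) = d) (hneg : c < 0) : c < d := by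
  obtain ⟨p, hp, hθ⟩ := hv.exists_critical_ge hW hc hneg
  have hwp : w p ≤ 1 := (abs_le.1 (hw.abs_le_one p)).2
  have hWlt : W (w p) < W (v p) :=
    hW.strictAntiOn ⟨hθ, (hlt p).le.trans hwp⟩ ⟨hθ.trans (hlt p).le, hwp⟩ (hlt p)
  have hcp := hc p
  rw [hp] at hcp
  linarith [hd p, sq_nonneg (w' p)]

theorem first_integral_eq_zero_or (hv : IsBoundedSolution W v v') (hw : IsBoundedSolution W w w')
    (hW : IsBistable W θ) (hlt : ∀ x, v x < w x) :
    (∀ x, v' x ^ 2 / 2 - W (v x) = 0) ∨ (∀ x, w' x ^ 2 / 2 - W (w x) = 0) := by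
  obtain ⟨c, hc⟩ := hv.exists_first_integral hW
  obtain ⟨d, hd⟩ := hw.exists_first_integral hW
  rcases (hv.first_integral_nonpos hW hc).lt_or_eq with hc_neg | rfl
  · rcases (hw.first_integral_nonpos hW hd).lt_or_eq with hd_neg | rfl
    · have hcd := hv.first_integral_lt_of_lt hw hW hlt hc hd hc_neg
      have hdc := hw.reflect.first_integral_lt_of_lt hv.reflect hW.reflect
        (fun x => neg_lt_neg (hlt x)) (c := d) (d := c)
        (by simpa using hd) (by simpa using hc) hd_neg
      exact absurd hcd hdc.not_gt
    · exact .inr hd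
  · exact .inl hc

theorem eq_const_of_stationary (hv : IsBoundedSolution W v v') (hW : IsBistable W θ) {x₀ : ℝ}
    (hv' : v' x₀ = 0) (hcrit : deriv W (v x₀) = 0) (x : ℝ) : v' x = 0 := by
  obtain ⟨L, hL⟩ := (hW.contDiff_deriv.locallyLipschitz.locallyLipschitzOn
    (s := Icc (-1 : ℝ) 1)).exists_lipschitzOnWith_of_compact isCompact_Icc
  let field : ℝ × ℝ → ℝ × ℝ := fun q => (q.2, deriv W q.1)
  have hfield : LipschitzOnWith (max 1 (L * 1)) field (Icc (-1 : ℝ) 1 ×ˢ univ) :=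
    LipschitzWith.prod_snd.lipschitzOnWith.prodMk
      (hL.comp LipschitzWith.prod_fst.lipschitzOnWith fun q hq => hq.1)
  have hunique : (fun x => (v x, v' x)) = fun _ => (v x₀, v' x₀) :=
    ODE_solution_unique_univ (v := fun _ => field) (s := fun _ => Icc (-1 : ℝ) 1 ×ˢ univ)
      (t₀ := x₀) (fun _ => hfield)
      (fun x => ⟨(hv.hasDerivAt x).prodMk (hv.hasDerivAt_deriv x),
        abs_le.1 (hv.abs_le_one x), trivial⟩)
      (fun x => ⟨by
        simpa only [field, hv', hcrit, Prod.mk_zero_zero] using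
          hasDerivAt_const x (v x₀, (0 : ℝ)),
        abs_le.1 (hv.abs_le_one x₀), trivial⟩) rfl
  exact (congrArg Prod.snd (congrFun hunique x)).trans hv'

theorem deriv_nonneg_or_nonpos (hv : IsBoundedSolution W v v') (hW : IsBistable W θ)
    (hc : ∀ x, v' x ^ 2 / 2 - W (v x) = 0) : (∀ x, 0 ≤ v' x) ∨ ∀ x, v' x ≤ 0 := by
  by_cases hzero : ∃ x₀, v' x₀ = 0
  · obtain ⟨x₀, hx₀⟩ := hzero
    have hW₀ : W (v x₀) = 0 := by simpa [hx₀] using hc x₀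
    exact .inl fun x => (hv.eq_const_of_stationary hW hx₀
      (hW.deriv_eq_zero_of_map_eq_zero hW₀) x).ge
  · rcases hasDerivWithinAt_forall_lt_or_forall_gt_of_forall_ne convex_univ
      (fun x _ => (hv.hasDerivAt x).hasDerivWithinAt)
      (fun x _ => not_exists.1 hzero x) with hneg | hpos
    · exact .inr fun x => (hneg x trivial).le
    · exact .inl fun x => (hpos x trivial).le

theorem integral_deriv_sq_le (hv : IsBoundedSolution W v v') (hW : IsBistable W θ)
    (hc : ∀ x, v' x ^ 2 / 2 - W (v x) = 0) {K : ℝ} (hK : ∀ x, |v' x| ≤ K) {a b : ℝ}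
    (hab : a ≤ b) : ∫ x in a..b, v' x ^ 2 ≤ 2 * K := by
  wlog hpos : ∀ x, 0 ≤ v' x generalizing W v v' θ
  · have hneg := (hv.deriv_nonneg_or_nonpos hW hc).resolve_left hpos
    simpa using this hv.reflect hW.reflect (by simpa using hc) (by simpa using hK)
      (fun x => neg_nonneg.2 (hneg x))
  have hK₀ : 0 ≤ K := (abs_nonneg _).trans (hK 0)
  calc ∫ x in a..b, v' x ^ 2 ≤ |∫ x in a..b, v' x * v' x| := by
        simp only [sq]
        exact le_abs_self _
    _ ≤ K * (v b - v a) := abs_integral_mul_deriv_le hab hv.hasDerivAt hv.continuous_deriv hpos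
        (fun x _ => hK x)
    _ ≤ 2 * K := by nlinarith [abs_le.1 (hv.abs_le_one a), abs_le.1 (hv.abs_le_one b)]

-- `W(v) = v'² / 2` along a solution of zero first integral, so the integrand is
-- `v'² - (v v')' / 2`.
theorem integral_potential_le (hv : IsBoundedSolution W v v') (hW : IsBistable W θ)
    (hc : ∀ x, v' x ^ 2 / 2 - W (v x) = 0) {K : ℝ} (hK : ∀ x, |v' x| ≤ K) {a b : ℝ}
    (hab : a ≤ b) : ∫ x in a..b, (W (v x) - v x * deriv W (v x) / 2) ≤ 3 * K := by
  have hcont := hv.continuous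
  have hcont' := hv.continuous_deriv
  have hcontW := hW.contDiff_deriv.continuous
  have hprod : ∫ x in a..b, (v' x * v' x + v x * deriv W (v x)) = v b * v' b - v a * v' a :=
    intervalIntegral.integral_eq_sub_of_hasDerivAt
      (fun x _ => (hv.hasDerivAt x).mul (hv.hasDerivAt_deriv x))
      (Continuous.intervalIntegrable (by fun_prop) a b)
  have hboundary : ∀ x, |v x * v' x| ≤ K := fun x => by
    rw [abs_mul]
    simpa using mul_le_mul (hv.abs_le_one x) (hK x) (abs_nonneg _) zero_le_one
  calc ∫ x in a..b, (W (v x) - v x * deriv W (v x) / 2)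
      = ∫ x in a..b, (v' x ^ 2 - (v' x * v' x + v x * deriv W (v x)) / 2) :=
        intervalIntegral.integral_congr fun x _ => by linarith [hc x]
    _ = (∫ x in a..b, v' x ^ 2) - (v b * v' b - v a * v' a) / 2 := by
        rw [intervalIntegral.integral_sub (Continuous.intervalIntegrable (by fun_prop) a b)
          (Continuous.intervalIntegrable (by fun_prop) a b), intervalIntegral.integral_div, hprod]
    _ ≤ 3 * K := by
        linarith [hv.integral_deriv_sq_le hW hc hK hab, abs_le.1 (hboundary a),
          abs_le.1 (hboundary b)]

end IsBoundedSolution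

/-! ### Partial derivatives and means in the second variable -/

section PartialDerivatives

variable {F : ℝ × ℝ → ℝ}

theorem pXX_eq_pX_pX (F : ℝ × ℝ → ℝ) : pXX F = pX (pX F) := rfl

theorem pYY_eq_pY_pY (F : ℝ × ℝ → ℝ) : pYY F = pY (pY F) := rfl

theorem hasDerivAt_fderiv_fst (hF : Differentiable ℝ F) (x y : ℝ) :
    HasDerivAt (fun r => F (r, y)) (fderiv ℝ F (x, y) (1, 0)) x :=
  (hF (x, y)).hasFDerivAt.comp_hasDerivAt x ((hasDerivAt_id x).prodMk (hasDerivAt_const x y))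

theorem hasDerivAt_fderiv_snd (hF : Differentiable ℝ F) (x y : ℝ) :
    HasDerivAt (fun r => F (x, r)) (fderiv ℝ F (x, y) (0, 1)) y :=
  (hF (x, y)).hasFDerivAt.comp_hasDerivAt y ((hasDerivAt_const y x).prodMk (hasDerivAt_id y))

theorem pX_eq_fderiv (hF : Differentiable ℝ F) : pX F = fun p => fderiv ℝ F p (1, 0) :=
  funext fun p => (hasDerivAt_fderiv_fst hF p.1 p.2).deriv

theorem pY_eq_fderiv (hF : Differentiable ℝ F) : pY F = fun p => fderiv ℝ F p (0, 1) :=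
  funext fun p => (hasDerivAt_fderiv_snd hF p.1 p.2).deriv

theorem hasDerivAt_pX (hF : Differentiable ℝ F) (x y : ℝ) :
    HasDerivAt (fun r => F (r, y)) (pX F (x, y)) x :=
  (hasDerivAt_fderiv_fst hF x y).differentiableAt.hasDerivAt

theorem hasDerivAt_pY (hF : Differentiable ℝ F) (x y : ℝ) :
    HasDerivAt (fun r => F (x, r)) (pY F (x, y)) y :=
  (hasDerivAt_fderiv_snd hF x y).differentiableAt.hasDerivAt

theorem contDiff_pX {n : ℕ} (hF : ContDiff ℝ (n + 1) F) : ContDiff ℝ n (pX F) := by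
  rw [pX_eq_fderiv (hF.differentiable (by simp))]
  exact (hF.fderiv_right le_rfl).clm_apply contDiff_const

theorem contDiff_pY {n : ℕ} (hF : ContDiff ℝ (n + 1) F) : ContDiff ℝ n (pY F) := by
  rw [pY_eq_fderiv (hF.differentiable (by simp))]
  exact (hF.fderiv_right le_rfl).clm_apply contDiff_const

theorem pX_pY (hF : ContDiff ℝ 2 F) : pX (pY F) = pY (pX F) := by
  have hdiff : Differentiable ℝ F := hF.differentiable two_ne_zero
  have hfderiv : Differentiable ℝ (fderiv ℝ F) :=
    (hF.fderiv_right (m := 1) le_rfl).differentiable one_ne_zero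
  rw [pX_eq_fderiv ((contDiff_pY (n := 1) hF).differentiable one_ne_zero),
    pY_eq_fderiv ((contDiff_pX (n := 1) hF).differentiable one_ne_zero),
    pX_eq_fderiv hdiff, pY_eq_fderiv hdiff]
  funext p
  rw [fderiv_clm_apply (hfderiv p) (differentiableAt_const _),
    fderiv_clm_apply (hfderiv p) (differentiableAt_const _)]
  simpa using second_derivative_symmetric (fun q => (hdiff q).hasFDerivAt)
    (hfderiv p).hasFDerivAt (1, 0) (0, 1)

theorem pX_sq (hF : Differentiable ℝ F) :
    pX (fun q => F q ^ 2) = fun q => 2 * (F q * pX F q) :=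
  funext fun q => ((hasDerivAt_pX hF q.1 q.2).pow 2).deriv.trans (by simp; ring)

theorem pY_sq (hF : Differentiable ℝ F) :
    pY (fun q => F q ^ 2) = fun q => 2 * (F q * pY F q) :=
  funext fun q => ((hasDerivAt_pY hF q.1 q.2).pow 2).deriv.trans (by simp; ring)

theorem grushinLap_sq (hF : ContDiff ℝ 2 F) (p : ℝ × ℝ) :
    grushinLap (fun q => F q ^ 2) p = 2 * F p * grushinLap F p + 2 * grushinGradSq F p := by
  have hdiff : Differentiable ℝ F := hF.differentiable two_ne_zero
  have hXX : pXX (fun q => F q ^ 2) p = 2 * (pX F p * pX F p + F p * pXX F p) := by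
    rw [pXX_eq_pX_pX, pX_sq hdiff]
    exact (((hasDerivAt_pX hdiff p.1 p.2).mul (hasDerivAt_pX
      ((contDiff_pX (n := 1) hF).differentiable one_ne_zero) p.1 p.2)).const_mul 2).deriv
  have hYY : pYY (fun q => F q ^ 2) p = 2 * (pY F p * pY F p + F p * pYY F p) := by
    rw [pYY_eq_pY_pY, pY_sq hdiff]
    exact (((hasDerivAt_pY hdiff p.1 p.2).mul (hasDerivAt_pY
      ((contDiff_pY (n := 1) hF).differentiable one_ne_zero) p.1 p.2)).const_mul 2).deriv
  rw [grushinLap, grushinLap, grushinGradSq, hXX, hYY]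
  ring

end PartialDerivatives

/-- The forward mean of `F` over a unit interval in the `y` variable. Two of them turn `∂_yy F`
into a second difference of `F`, so that limits as `y → ±∞` can be taken without control on the
`y`-derivatives. -/
noncomputable def yMean (F : ℝ × ℝ → ℝ) (p : ℝ × ℝ) : ℝ := ∫ s in (0 : ℝ)..1, F (p.1, p.2 + s)

/-- The function `φ` is the limit of the slices `F(·, t n)`, and of all their translates in `y`. -/
def IsLimitProfile (F : ℝ × ℝ → ℝ) (t : ℕ → ℝ) (φ : ℝ → ℝ) : Prop :=
  ∀ x s, Tendsto (fun n => F (x, t n + s)) atTop (𝓝 (φ x))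

section Mean

variable {F G : ℝ × ℝ → ℝ}

theorem continuous_yMean (hF : Continuous F) : Continuous (yMean F) :=
  intervalIntegral.continuous_parametric_intervalIntegral_of_continuous'
    (f := fun (p : ℝ × ℝ) s => F (p.1, p.2 + s)) (by fun_prop) 0 1

theorem yMean_add (hF : Continuous F) (hG : Continuous G) :
    yMean (fun p => F p + G p) = fun p => yMean F p + yMean G p :=
  funext fun p => intervalIntegral.integral_add
    (Continuous.intervalIntegrable (by fun_prop) 0 1)
    (Continuous.intervalIntegrable (by fun_prop) 0 1)

theorem yMean_fst_mul (g : ℝ → ℝ) (F : ℝ × ℝ → ℝ) :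
    yMean (fun p => g p.1 * F p) = fun p => g p.1 * yMean F p :=
  funext fun p => intervalIntegral.integral_const_mul (g p.1) fun s => F (p.1, p.2 + s)

theorem abs_yMean_le {B : ℝ} (hB : ∀ p, |F p| ≤ B) (p : ℝ × ℝ) : |yMean F p| ≤ B := by
  simpa [yMean] using intervalIntegral.norm_integral_le_of_norm_le_const
    (f := fun s => F (p.1, p.2 + s)) (a := 0) (b := 1) (fun s _ => hB (p.1, p.2 + s))

theorem hasDerivAt_yMean {F' : ℝ × ℝ → ℝ} (hF : Continuous F) (hF' : Continuous F')
    (hderiv : ∀ x y, HasDerivAt (fun r => F (r, y)) (F' (x, y)) x) (x y : ℝ) :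
    HasDerivAt (fun r => yMean F (r, y)) (yMean F' (x, y)) x :=
  hasDerivAt_intervalIntegral (F := fun r s => F (r, y + s)) (F' := fun r s => F' (r, y + s))
    (fun r => by fun_prop) (by fun_prop) (fun r s => hderiv r (y + s)) 0 1 x

theorem hasDerivAt_yMean_yMean (hF : ContDiff ℝ 1 F) (x y : ℝ) :
    HasDerivAt (fun r => yMean (yMean F) (r, y)) (yMean (yMean (pX F)) (x, y)) x := by
  have hX : Continuous (pX F) := (contDiff_pX (n := 0) hF).continuous
  exact hasDerivAt_yMean (continuous_yMean hF.continuous) (continuous_yMean hX)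
    (hasDerivAt_yMean hF.continuous hX (hasDerivAt_pX (hF.differentiable one_ne_zero))) x y

theorem yMean_pY (hF : ContDiff ℝ 1 F) : yMean (pY F) = fun p => F (p.1, p.2 + 1) - F p := by
  have hcont : Continuous (pY F) := (contDiff_pY (n := 0) hF).continuous
  funext p
  simpa [yMean] using intervalIntegral.integral_eq_sub_of_hasDerivAt
    (fun s _ => (hasDerivAt_pY (hF.differentiable one_ne_zero) p.1 (p.2 + s)).comp_const_add p.2 s)
    (Continuous.intervalIntegrable (by fun_prop) (0 : ℝ) 1)

theorem yMean_yMean_pYY (hF : ContDiff ℝ 2 F) (p : ℝ × ℝ) :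
    yMean (yMean (pYY F)) p = F (p.1, p.2 + 2) - 2 * F (p.1, p.2 + 1) + F p := by
  have hY : ContDiff ℝ 1 (pY F) := contDiff_pY hF
  have hF₁ := yMean_pY (hF.of_le one_le_two)
  calc yMean (yMean (pYY F)) p
      = ∫ s in (0 : ℝ)..1, (pY F (p.1, p.2 + 1 + s) - pY F (p.1, p.2 + s)) := by
        rw [pYY_eq_pY_pY, yMean_pY hY]
        simp only [yMean, add_right_comm]
    _ = yMean (pY F) (p.1, p.2 + 1) - yMean (pY F) p :=
        intervalIntegral.integral_sub (Continuous.intervalIntegrable (by fun_prop) 0 1)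
          (Continuous.intervalIntegrable (by fun_prop) 0 1)
    _ = _ := by
        rw [hF₁]
        dsimp only
        rw [add_assoc, one_add_one_eq_two]
        ring

theorem le_integral_yMean (hF : Continuous F) {a b m : ℝ}
    (hm : ∀ y, m ≤ ∫ x in a..b, F (x, y)) (y : ℝ) : m ≤ ∫ x in a..b, yMean F (x, y) := by
  have hswap : ∫ x in a..b, yMean F (x, y) = ∫ s in (0 : ℝ)..1, ∫ x in a..b, F (x, y + s) :=
    intervalIntegral_intervalIntegral_swap <|
      ((Continuous.continuousOn (by fun_prop)).integrableOn_compact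
        (isCompact_uIcc.prod isCompact_uIcc)).mono_set (prod_mono uIoc_subset_uIcc uIoc_subset_uIcc)
  have hcont : Continuous fun s => ∫ x in a..b, F (x, y + s) :=
    intervalIntegral.continuous_parametric_intervalIntegral_of_continuous'
      (f := fun s x => F (x, y + s)) (by fun_prop) a b
  calc m = ∫ _ in (0 : ℝ)..1, m := by simp
    _ ≤ ∫ s in (0 : ℝ)..1, ∫ x in a..b, F (x, y + s) :=
        intervalIntegral.integral_mono zero_le_one intervalIntegrable_const
          (hcont.intervalIntegrable 0 1) fun s => hm (y + s)
    _ = _ := hswap.symm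

theorem isLimitProfile_yMean {t : ℕ → ℝ} {φ : ℝ → ℝ} {B : ℝ} (h : IsLimitProfile F t φ)
    (hF : Continuous F) (hB : ∀ p, |F p| ≤ B) : IsLimitProfile (yMean F) t φ := fun x s => by
  simpa [yMean] using tendsto_intervalIntegral_of_abs_le
    (f := fun n r => F (x, t n + s + r)) (g := fun _ => φ x) (fun n => by fun_prop)
    (continuous_const (y := B)) (fun n r => hB _)
    (fun r => by simpa only [add_assoc] using h x (s + r)) 0 1

theorem IsLimitProfile.comp {t : ℕ → ℝ} {φ g : ℝ → ℝ} (hφ : IsLimitProfile F t φ)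
    (hg : Continuous g) : IsLimitProfile (fun p => g (F p)) t (fun x => g (φ x)) :=
  fun x s => (hg.tendsto _).comp (hφ x s)

theorem IsLimitProfile.tendsto_second_difference {t : ℕ → ℝ} {φ : ℝ → ℝ}
    (h : IsLimitProfile F t φ) (x : ℝ) :
    Tendsto (fun n => F (x, t n + 2) - 2 * F (x, t n + 1) + F (x, t n)) atTop (𝓝 0) := by
  have hlim := ((h x 2).sub ((h x 1).const_mul 2)).add (h x 0)
  simp only [add_zero] at hlim
  convert hlim using 2
  ring

section AddMulPYY

variable {P : ℝ × ℝ → ℝ} {g φ ψ : ℝ → ℝ} {t : ℕ → ℝ} {A B : ℝ}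

theorem yMean_yMean_add_mul_pYY (hF : ContDiff ℝ 2 F) (hP : Continuous P) (hg : Continuous g)
    (p : ℝ × ℝ) : yMean (yMean fun q => P q + g q.1 * pYY F q) p =
      yMean (yMean P) p + g p.1 * (F (p.1, p.2 + 2) - 2 * F (p.1, p.2 + 1) + F p) := by
  have hYY : Continuous (pYY F) :=
    (contDiff_pY (n := 0) (contDiff_pY (n := 1) hF)).continuous
  have hMYY := continuous_yMean hYY
  rw [yMean_add hP (by fun_prop), yMean_fst_mul, yMean_add (continuous_yMean hP) (by fun_prop),
    yMean_fst_mul, ← yMean_yMean_pYY hF]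

theorem abs_yMean_yMean_add_mul_pYY_le (hF : ContDiff ℝ 2 F) (hP : Continuous P)
    (hg : Continuous g) (hA : ∀ p, |F p| ≤ A) (hB : ∀ p, |P p| ≤ B) (p : ℝ × ℝ) :
    |yMean (yMean fun q => P q + g q.1 * pYY F q) p| ≤ B + |g p.1| * (4 * A) := by
  have hdiff : |F (p.1, p.2 + 2) - 2 * F (p.1, p.2 + 1) + F p| ≤ 4 * A := by
    have h₀ := abs_le.1 (hA p)
    have h₁ := abs_le.1 (hA (p.1, p.2 + 1))
    have h₂ := abs_le.1 (hA (p.1, p.2 + 2))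
    exact abs_le.2 ⟨by linarith, by linarith⟩
  rw [yMean_yMean_add_mul_pYY hF hP hg]
  refine (abs_add_le _ _).trans (add_le_add (abs_yMean_le (abs_yMean_le hB) _) ?_)
  rw [abs_mul]
  exact mul_le_mul_of_nonneg_left hdiff (abs_nonneg _)

theorem tendsto_yMean_yMean_add_mul_pYY (hF : ContDiff ℝ 2 F) (hP : Continuous P)
    (hg : Continuous g) (hB : ∀ p, |P p| ≤ B) (hφ : IsLimitProfile F t φ)
    (hψ : IsLimitProfile P t ψ) (x : ℝ) :
    Tendsto (fun n => yMean (yMean fun q => P q + g q.1 * pYY F q) (x, t n)) atTop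
      (𝓝 (ψ x)) := by
  have hmean := isLimitProfile_yMean (isLimitProfile_yMean hψ hP hB) (continuous_yMean hP)
    (abs_yMean_le hB) x 0
  simpa [yMean_yMean_add_mul_pYY hF hP hg] using
    hmean.add ((hφ.tendsto_second_difference x).const_mul (g x))

theorem le_integral_of_isLimitProfile (hF : ContDiff ℝ 2 F) (hP : Continuous P)
    (hg : Continuous g) (hA : ∀ p, |F p| ≤ A) (hB : ∀ p, |P p| ≤ B)
    (hφ : IsLimitProfile F t φ) (hψ : IsLimitProfile P t ψ) {a b m : ℝ}
    (hm : ∀ y, m ≤ ∫ x in a..b, (P (x, y) + g x * pYY F (x, y))) : m ≤ ∫ x in a..b, ψ x := by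
  have hYY : Continuous (pYY F) :=
    (contDiff_pY (n := 0) (contDiff_pY (n := 1) hF)).continuous
  have hcont : Continuous fun q => P q + g q.1 * pYY F q := by fun_prop
  have hM := continuous_yMean (continuous_yMean hcont)
  exact ge_of_tendsto' (tendsto_intervalIntegral_of_abs_le (fun n => by fun_prop)
    (by fun_prop : Continuous fun x => B + |g x| * (4 * A))
    (fun n x => abs_yMean_yMean_add_mul_pYY_le hF hP hg hA hB (x, t n))
    (tendsto_yMean_yMean_add_mul_pYY hF hP hg hB hφ hψ) a b)
    fun n => le_integral_yMean (continuous_yMean hcont) (le_integral_yMean hcont hm) (t n)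

end AddMulPYY

end Mean

/-! ### Rectangles and Grushin balls -/

section Rectangle

variable {F : ℝ × ℝ → ℝ} {a b c d M R : ℝ}

theorem setIntegral_prod_le_of_slice_le (hF : Continuous F) (hab : a ≤ b) (hcd : c ≤ d)
    (hM : ∀ x ∈ Icc a b, ∫ y in c..d, F (x, y) ≤ M) :
    ∫ p in Icc a b ×ˢ Icc c d, F p ≤ (b - a) * M := by
  have hslice : Continuous fun x => ∫ y in c..d, F (x, y) :=
    intervalIntegral.continuous_parametric_intervalIntegral_of_continuous'
      (f := fun x y => F (x, y)) (by fun_prop) c d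
  calc ∫ p in Icc a b ×ˢ Icc c d, F p = ∫ x in Icc a b, ∫ y in Icc c d, F (x, y) :=
        setIntegral_prod F (hF.continuousOn.integrableOn_compact (isCompact_Icc.prod isCompact_Icc))
    _ = ∫ x in a..b, ∫ y in c..d, F (x, y) := by
        simp only [integral_Icc_eq_integral_Ioc, intervalIntegral.integral_of_le hab,
          intervalIntegral.integral_of_le hcd]
    _ ≤ ∫ _ in a..b, M := intervalIntegral.integral_mono_on hab (hslice.intervalIntegrable a b)
        intervalIntegrable_const hM
    _ = (b - a) * M := by rw [intervalIntegral.integral_const, smul_eq_mul]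

theorem setIntegral_prod_le_of_slice_le' (hF : Continuous F) (hab : a ≤ b) (hcd : c ≤ d)
    (hM : ∀ y ∈ Icc c d, ∫ x in a..b, F (x, y) ≤ M) :
    ∫ p in Icc a b ×ˢ Icc c d, F p ≤ (d - c) * M := by
  rw [Measure.volume_eq_prod, ← setIntegral_prod_swap, ← Measure.volume_eq_prod]
  exact setIntegral_prod_le_of_slice_le (F := fun q => F q.swap) (by fun_prop) hcd hab hM

theorem gBall_zero_subset (hR : 0 ≤ R) :
    gBall 0 R ⊆ Icc (-R) R ×ˢ Icc (-R ^ 2) (R ^ 2) := by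
  intro p hp
  have hnorm : (p.1 ^ 4 + 4 * p.2 ^ 2) ^ ((1 : ℝ) / 4) < R := by
    simpa [gBall, gNorm] using hp
  have hpow : p.1 ^ 4 + 4 * p.2 ^ 2 < R ^ 4 := by
    rw [one_div, Real.rpow_inv_lt_iff_of_pos (by positivity) hR (by norm_num)] at hnorm
    exact_mod_cast hnorm
  have hx : |p.1| ≤ R :=
    abs_le_of_sq_le_sq (le_of_sq_le_sq (by nlinarith [sq_nonneg p.2]) (sq_nonneg R)) hR
  have hy : |p.2| ≤ R ^ 2 :=
    abs_le_of_sq_le_sq (by nlinarith [sq_nonneg (p.1 ^ 2), sq_nonneg p.2]) (sq_nonneg R)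
  exact ⟨abs_le.1 hx, abs_le.1 hy⟩

theorem setIntegral_gBall_le (hF : Continuous F) (hpos : ∀ p, 0 ≤ F p) (hR : 0 ≤ R) :
    ∫ p in gBall 0 R, F p ≤ ∫ p in Icc (-R) R ×ˢ Icc (-R ^ 2) (R ^ 2), F p :=
  setIntegral_mono_set
    (hF.continuousOn.integrableOn_compact (isCompact_Icc.prod isCompact_Icc))
    (.of_forall hpos) (gBall_zero_subset hR).eventuallyLE

end Rectangle

theorem grushinGradSq_nonneg (F : ℝ × ℝ → ℝ) (p : ℝ × ℝ) : 0 ≤ grushinGradSq F p := by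
  rw [grushinGradSq]
  positivity

/-! ### Slices of a monotone solution -/

/-- A classical solution of `Δ_G u = W'(u)` on the plane with values in `[-1, 1]`, Grushin gradient
bounded by `K`, and `∂_y u > 0`. -/
structure IsMonotoneSolution (W : ℝ → ℝ) (K : ℝ) (u : ℝ × ℝ → ℝ) : Prop where
  contDiff : ContDiff ℝ 2 u
  mem_Icc : ∀ p, u p ∈ Icc (-1 : ℝ) 1
  sqrt_grushinGradSq_le : ∀ p, Real.sqrt (grushinGradSq u p) ≤ K
  grushinLap_eq : ∀ p, grushinLap u p = deriv W (u p)
  pY_pos : ∀ p, 0 < pY u p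

/-- The density of the Hamiltonian of the equation `Δ_G u = W'(u)`, read as an evolution in `y`. -/
noncomputable def hamiltonianDensity (W : ℝ → ℝ) (u : ℝ × ℝ → ℝ) (p : ℝ × ℝ) : ℝ :=
  pX u p ^ 2 / 2 - p.1 ^ 2 * pY u p ^ 2 / 2 + W (u p)

namespace IsMonotoneSolution

variable {W : ℝ → ℝ} {K θ : ℝ} {u : ℝ × ℝ → ℝ} {t : ℕ → ℝ} {v : ℝ → ℝ}

theorem abs_le_one (hu : IsMonotoneSolution W K u) (p : ℝ × ℝ) : |u p| ≤ 1 :=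
  abs_le.2 (hu.mem_Icc p)

theorem differentiable (hu : IsMonotoneSolution W K u) : Differentiable ℝ u :=
  hu.contDiff.differentiable two_ne_zero

theorem contDiff_pX (hu : IsMonotoneSolution W K u) : ContDiff ℝ 1 (pX u) :=
  _root_.contDiff_pX hu.contDiff

theorem contDiff_pY (hu : IsMonotoneSolution W K u) : ContDiff ℝ 1 (pY u) :=
  _root_.contDiff_pY hu.contDiff

theorem abs_pX_le (hu : IsMonotoneSolution W K u) (p : ℝ × ℝ) : |pX u p| ≤ K :=
  (Real.abs_le_sqrt (le_add_of_nonneg_right (by positivity))).trans (hu.sqrt_grushinGradSq_le p)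

theorem abs_fst_mul_pY_le (hu : IsMonotoneSolution W K u) (p : ℝ × ℝ) : |p.1 * pY u p| ≤ K :=
  (Real.abs_le_sqrt (by
    rw [mul_pow, grushinGradSq]
    exact le_add_of_nonneg_left (sq_nonneg _))).trans (hu.sqrt_grushinGradSq_le p)

theorem bound_nonneg (hu : IsMonotoneSolution W K u) : 0 ≤ K :=
  (abs_nonneg _).trans (hu.abs_pX_le 0)

theorem exists_abs_comp_le (hu : IsMonotoneSolution W K u) {G : ℝ → ℝ} (hG : Continuous G) :
    ∃ B, ∀ p, |G (u p)| ≤ B := by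
  obtain ⟨B, hB⟩ := isCompact_Icc.exists_bound_of_continuousOn hG.continuousOn
  exact ⟨B, fun p => hB _ (hu.mem_Icc p)⟩

theorem pXX_eq (hu : IsMonotoneSolution W K u) :
    pXX u = fun q => deriv W (u q) + -q.1 ^ 2 * pYY u q := funext fun q => by
  rw [← hu.grushinLap_eq, grushinLap]
  ring

theorem exists_isBoundedSolution (hu : IsMonotoneSolution W K u) (hW : Continuous (deriv W))
    (hv : IsLimitProfile u t v) : ∃ v', IsBoundedSolution W v v' ∧ ∀ x, |v' x| ≤ K := by
  have hcont := hu.contDiff.continuous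
  have hW' : Continuous fun q => deriv W (u q) := hW.comp hcont
  have hMMXX : Continuous (yMean (yMean (pXX u))) :=
    continuous_yMean (continuous_yMean (_root_.contDiff_pX (n := 0) hu.contDiff_pX).continuous)
  have hg : Continuous fun x : ℝ => -x ^ 2 := by fun_prop
  obtain ⟨B, hB⟩ := hu.exists_abs_comp_le hW
  have hderiv := hasDerivAt_yMean_yMean (hu.contDiff.of_le one_le_two)
  have hderiv' : ∀ x y,
      HasDerivAt (fun r => yMean (yMean (pX u)) (r, y)) (yMean (yMean (pXX u)) (x, y)) x :=
    hasDerivAt_yMean_yMean hu.contDiff_pX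
  have hK : ∀ n x, |yMean (yMean (pX u)) (x, t n)| ≤ K := fun n x =>
    abs_yMean_le (abs_yMean_le hu.abs_pX_le) _
  have hlim : ∀ x, Tendsto (fun n => yMean (yMean u) (x, t n)) atTop (𝓝 (v x)) := fun x => by
    simpa using isLimitProfile_yMean (isLimitProfile_yMean hv hcont hu.abs_le_one)
      (continuous_yMean hcont) (abs_yMean_le hu.abs_le_one) x 0
  have hv_cont : Continuous v :=
    continuous_of_tendsto_of_abs_deriv_le (fun n x => hderiv x (t n)) hK hlim
  have hXX_le : ∀ n x, |yMean (yMean (pXX u)) (x, t n)| ≤ B + |-x ^ 2| * (4 * 1) := fun n x => by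
    rw [hu.pXX_eq]
    exact abs_yMean_yMean_add_mul_pYY_le (g := fun x => -x ^ 2) hu.contDiff hW' hg hu.abs_le_one
      hB (x, t n)
  have hXX_lim : ∀ x,
      Tendsto (fun n => yMean (yMean (pXX u)) (x, t n)) atTop (𝓝 (deriv W (v x))) := by
    rw [hu.pXX_eq]
    exact tendsto_yMean_yMean_add_mul_pYY (g := fun x => -x ^ 2) hu.contDiff hW' hg hB hv
      (hv.comp hW)
  obtain ⟨v', hv', hv'', hv'K⟩ := exists_hasDerivAt_of_tendsto_of_abs_le
    (fun n x => hderiv x (t n)) (fun n x => hderiv' x (t n)) (fun n => by fun_prop) hK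
    (by fun_prop) hXX_le (hW.comp hv_cont) hlim hXX_lim
  exact ⟨v', ⟨hv', hv'', fun x => le_of_tendsto (hv x 0).abs
    (.of_forall fun n => hu.abs_le_one _)⟩, hv'K⟩

theorem hasDerivAt_hamiltonianDensity (hu : IsMonotoneSolution W K u) (hW : Differentiable ℝ W)
    (x y : ℝ) : HasDerivAt (fun s => hamiltonianDensity W u (x, s))
      (pXX u (x, y) * pY u (x, y) + pX u (x, y) * pY (pX u) (x, y)) y := by
  have hX := hasDerivAt_pY (hu.contDiff_pX.differentiable one_ne_zero) x y
  have hY := hasDerivAt_pY (hu.contDiff_pY.differentiable one_ne_zero) x y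
  have hWu := (hW (u (x, y))).hasDerivAt.comp y (hasDerivAt_pY hu.differentiable x y)
  refine ((((hX.pow 2).div_const 2).sub (((hY.pow 2).const_mul (x ^ 2)).div_const 2)).add
    hWu).congr_deriv ?_
  rw [← hu.grushinLap_eq, grushinLap, pYY_eq_pY_pY]
  push_cast
  ring

theorem continuous_hamiltonianDensity (hu : IsMonotoneSolution W K u) (hW : Continuous W) :
    Continuous (hamiltonianDensity W u) := by
  have hcont := hu.contDiff.continuous
  have hX := hu.contDiff_pX.continuous
  have hY := hu.contDiff_pY.continuous
  unfold hamiltonianDensity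
  fun_prop

theorem hasDerivAt_integral_hamiltonianDensity (hu : IsMonotoneSolution W K u)
    (hW : Differentiable ℝ W) (a b y : ℝ) :
    HasDerivAt (fun s => ∫ x in a..b, hamiltonianDensity W u (x, s))
      (pX u (b, y) * pY u (b, y) - pX u (a, y) * pY u (a, y)) y := by
  have hH := hu.continuous_hamiltonianDensity hW.continuous
  have hX := hu.contDiff_pX
  have hY := hu.contDiff_pY
  have hXX : Continuous (pXX u) := (_root_.contDiff_pX (n := 0) hX).continuous
  have hYX : Continuous (pY (pX u)) := (_root_.contDiff_pY (n := 0) hX).continuous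
  have hflux : ∀ x, HasDerivAt (fun x => pX u (x, y) * pY u (x, y))
      (pXX u (x, y) * pY u (x, y) + pX u (x, y) * pY (pX u) (x, y)) x := fun x => by
    rw [← pX_pY hu.contDiff]
    exact (hasDerivAt_pX (hX.differentiable one_ne_zero) x y).mul
      (hasDerivAt_pX (hY.differentiable one_ne_zero) x y)
  rw [← intervalIntegral.integral_eq_sub_of_hasDerivAt (fun x _ => hflux x)
    (Continuous.intervalIntegrable (by fun_prop) a b)]
  exact hasDerivAt_intervalIntegral (F := fun s x => hamiltonianDensity W u (x, s))
    (F' := fun s x => pXX u (x, s) * pY u (x, s) + pX u (x, s) * pY (pX u) (x, s))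
    (fun s => by fun_prop) (by fun_prop)
    (fun s x => hu.hasDerivAt_hamiltonianDensity hW x s) a b y

theorem abs_integral_mul_pY_le (hu : IsMonotoneSolution W K u) {g : ℝ → ℝ} {M x y z : ℝ}
    (hM : 0 ≤ M) (hyz : y ≤ z) (hg : ∀ s ∈ Ioc y z, |g s| ≤ M) :
    |∫ s in y..z, g s * pY u (x, s)| ≤ 2 * M := by
  have hY := hu.contDiff_pY.continuous
  calc |∫ s in y..z, g s * pY u (x, s)| ≤ M * (u (x, z) - u (x, y)) :=
        abs_integral_mul_deriv_le hyz (hasDerivAt_pY hu.differentiable x) (by fun_prop)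
          (fun s => (hu.pY_pos _).le) hg
    _ ≤ 2 * M := by nlinarith [(hu.mem_Icc (x, z)).2, (hu.mem_Icc (x, y)).1]

theorem integral_hamiltonianDensity_le_add (hu : IsMonotoneSolution W K u)
    (hW : Differentiable ℝ W) (a b y z : ℝ) :
    ∫ x in a..b, hamiltonianDensity W u (x, y) ≤
      (∫ x in a..b, hamiltonianDensity W u (x, z)) + 4 * K := by
  have hX := hu.contDiff_pX.continuous
  have hY := hu.contDiff_pY.continuous
  have hint : ∀ x r s, IntervalIntegrable (fun s => pX u (x, s) * pY u (x, s)) volume r s :=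
    fun x r s => Continuous.intervalIntegrable (by fun_prop) r s
  have hdiff : ∀ r s, (∫ x in a..b, hamiltonianDensity W u (x, s))
      - ∫ x in a..b, hamiltonianDensity W u (x, r) =
      (∫ q in r..s, pX u (b, q) * pY u (b, q)) - ∫ q in r..s, pX u (a, q) * pY u (a, q) :=
    fun r s => by
      rw [← intervalIntegral.integral_sub (hint b r s) (hint a r s),
        intervalIntegral.integral_eq_sub_of_hasDerivAt
          (fun q _ => hu.hasDerivAt_integral_hamiltonianDensity hW a b q)
          ((hint b r s).sub (hint a r s))]
  have hflux : ∀ x {r s}, r ≤ s → |∫ q in r..s, pX u (x, q) * pY u (x, q)| ≤ 2 * K :=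
    fun x r s hrs => hu.abs_integral_mul_pY_le hu.bound_nonneg hrs fun q _ => hu.abs_pX_le (x, q)
  rcases le_total y z with h | h
  · linarith [hdiff y z, abs_le.1 (hflux a h), abs_le.1 (hflux b h)]
  · linarith [hdiff z y, abs_le.1 (hflux a h), abs_le.1 (hflux b h)]

theorem grushinGradSq_div_two_add (hu : IsMonotoneSolution W K u) (p : ℝ × ℝ) :
    grushinGradSq u p / 2 + W (u p) =
      grushinLap (fun q => u q ^ 2) p / 4 + (W (u p) - u p * deriv W (u p) / 2) := by
  rw [grushinLap_sq hu.contDiff, hu.grushinLap_eq]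
  ring

theorem integral_pXX_sq_le (hu : IsMonotoneSolution W K u) (a b y : ℝ) :
    ∫ x in a..b, pXX (fun q => u q ^ 2) (x, y) ≤ 4 * K := by
  have hX : ContDiff ℝ 1 (pX fun q => u q ^ 2) := _root_.contDiff_pX (hu.contDiff.pow 2)
  have hXX : Continuous (pX (pX fun q => u q ^ 2)) := (_root_.contDiff_pX (n := 0) hX).continuous
  have hboundary : ∀ p, |pX (fun q => u q ^ 2) p| ≤ 2 * K := fun p => by
    rw [pX_sq hu.differentiable, abs_mul, abs_mul, abs_two]
    exact mul_le_mul_of_nonneg_left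
      ((mul_le_mul (hu.abs_le_one p) (hu.abs_pX_le p) (abs_nonneg _) zero_le_one).trans_eq
        (one_mul K)) zero_le_two
  rw [pXX_eq_pX_pX, intervalIntegral.integral_eq_sub_of_hasDerivAt
    (fun x _ => hasDerivAt_pX (hX.differentiable one_ne_zero) x y)
    (Continuous.intervalIntegrable (by fun_prop) a b)]
  linarith [abs_le.1 (hboundary (a, y)), abs_le.1 (hboundary (b, y))]

theorem integral_hamiltonianDensity_le_integral_slice (hu : IsMonotoneSolution W K u)
    (hW : IsBistable W θ) {a b : ℝ} (hab : a ≤ b) (y : ℝ) :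
    ∫ x in a..b, hamiltonianDensity W u (x, y) ≤ K + ∫ x in a..b,
      (W (u (x, y)) - u (x, y) * deriv W (u (x, y)) / 2
        + x ^ 2 / 4 * pYY (fun q => u q ^ 2) (x, y)) := by
  have hcont := hu.contDiff.continuous
  have hcontW := hW.contDiff.continuous
  have hcontW' := hW.contDiff_deriv.continuous
  have hsq : ContDiff ℝ 2 fun q => u q ^ 2 := hu.contDiff.pow 2
  have hXX : Continuous (pXX fun q => u q ^ 2) :=
    (_root_.contDiff_pX (n := 0) (_root_.contDiff_pX (n := 1) hsq)).continuous
  have hYY : Continuous (pYY fun q => u q ^ 2) :=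
    (_root_.contDiff_pY (n := 0) (_root_.contDiff_pY (n := 1) hsq)).continuous
  have hH := hu.continuous_hamiltonianDensity hcontW
  have hflux : ∫ x in a..b, pXX (fun q => u q ^ 2) (x, y) / 4 ≤ K := by
    rw [intervalIntegral.integral_div]
    linarith [hu.integral_pXX_sq_le a b y]
  refine le_trans ?_ (add_le_add_left hflux _)
  rw [← intervalIntegral.integral_add (Continuous.intervalIntegrable (by fun_prop) a b)
    (Continuous.intervalIntegrable (by fun_prop) a b)]
  refine intervalIntegral.integral_mono_on hab (Continuous.intervalIntegrable (by fun_prop) a b)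
    (Continuous.intervalIntegrable (by fun_prop) a b) fun x _ => ?_
  have henergy := hu.grushinGradSq_div_two_add (x, y)
  rw [grushinGradSq, grushinLap] at henergy
  dsimp only [hamiltonianDensity] at henergy ⊢
  nlinarith [mul_nonneg (sq_nonneg x) (sq_nonneg (pY u (x, y)))]

theorem integral_hamiltonianDensity_le_integral_limit (hu : IsMonotoneSolution W K u)
    (hW : IsBistable W θ) (hv : IsLimitProfile u t v) {a b : ℝ} (hab : a ≤ b) (y : ℝ) :
    ∫ x in a..b, hamiltonianDensity W u (x, y) ≤
      5 * K + ∫ x in a..b, (W (v x) - v x * deriv W (v x) / 2) := by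
  have hG : Continuous fun s => W s - s * deriv W s / 2 := by
    have := hW.contDiff.continuous
    have := hW.contDiff_deriv.continuous
    fun_prop
  have hP : Continuous fun q => W (u q) - u q * deriv W (u q) / 2 :=
    hG.comp hu.contDiff.continuous
  obtain ⟨A, hA⟩ := hu.exists_abs_comp_le (continuous_pow 2)
  obtain ⟨B, hB⟩ := hu.exists_abs_comp_le hG
  have hm := le_integral_of_isLimitProfile (g := fun x => x ^ 2 / 4) (hu.contDiff.pow 2) hP
    (by fun_prop) hA hB (hv.comp (continuous_pow 2)) (hv.comp hG) (a := a) (b := b)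
    (m := (∫ x in a..b, hamiltonianDensity W u (x, y)) - 5 * K) fun z => by
      linarith [hu.integral_hamiltonianDensity_le_add (hW.contDiff.differentiable two_ne_zero)
        a b y z, hu.integral_hamiltonianDensity_le_integral_slice hW hab z]
  linarith

theorem strictMono_snd (hu : IsMonotoneSolution W K u) (x : ℝ) :
    StrictMono fun y => u (x, y) :=
  strictMono_of_hasDerivAt_pos (hasDerivAt_pY hu.differentiable x) fun y => hu.pY_pos (x, y)

theorem exists_upper_profile (hu : IsMonotoneSolution W K u) :
    ∃ v, IsLimitProfile u (fun n => (n : ℝ)) v ∧ ∀ x, u (x, 0) < v x := by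
  have hbdd : ∀ x, BddAbove (range fun y => u (x, y)) := fun x =>
    ⟨1, forall_mem_range.2 fun y => (hu.mem_Icc (x, y)).2⟩
  refine ⟨fun x => ⨆ y, u (x, y), fun x s => ?_, fun x => ?_⟩
  · exact (tendsto_atTop_ciSup (hu.strictMono_snd x).monotone (hbdd x)).comp
      (tendsto_atTop_add_const_right _ s tendsto_natCast_atTop_atTop)
  · exact (hu.strictMono_snd x one_pos).trans_le (le_ciSup (hbdd x) 1)

theorem exists_lower_profile (hu : IsMonotoneSolution W K u) :
    ∃ v, IsLimitProfile u (fun n => -(n : ℝ)) v ∧ ∀ x, v x < u (x, 0) := by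
  have hbdd : ∀ x, BddBelow (range fun y => u (x, y)) := fun x =>
    ⟨-1, forall_mem_range.2 fun y => (hu.mem_Icc (x, y)).1⟩
  refine ⟨fun x => ⨅ y, u (x, y), fun x s => ?_, fun x => ?_⟩
  · exact (tendsto_atBot_ciInf (hu.strictMono_snd x).monotone (hbdd x)).comp
      (tendsto_atBot_add_const_right _ s
        (tendsto_neg_atTop_atBot.comp tendsto_natCast_atTop_atTop))
  · exact (ciInf_le (hbdd x) (-1)).trans_lt (hu.strictMono_snd x neg_one_lt_zero)

theorem exists_profile_first_integral_eq_zero (hu : IsMonotoneSolution W K u)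
    (hW : IsBistable W θ) : ∃ t v v', IsLimitProfile u t v ∧ IsBoundedSolution W v v' ∧
      (∀ x, |v' x| ≤ K) ∧ ∀ x, v' x ^ 2 / 2 - W (v x) = 0 := by
  have hW' := hW.contDiff_deriv.continuous
  obtain ⟨v, hv, hv_lt⟩ := hu.exists_lower_profile
  obtain ⟨w, hw, hw_gt⟩ := hu.exists_upper_profile
  obtain ⟨v', hv_sol, hv'K⟩ := hu.exists_isBoundedSolution hW' hv
  obtain ⟨w', hw_sol, hw'K⟩ := hu.exists_isBoundedSolution hW' hw
  rcases hv_sol.first_integral_eq_zero_or hw_sol hW fun x => (hv_lt x).trans (hw_gt x) with hc | hc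
  · exact ⟨_, v, v', hv, hv_sol, hv'K, hc⟩
  · exact ⟨_, w, w', hw, hw_sol, hw'K, hc⟩

theorem integral_hamiltonianDensity_le_eight_mul (hu : IsMonotoneSolution W K u)
    (hW : IsBistable W θ) {a b : ℝ} (hab : a ≤ b) (y : ℝ) :
    ∫ x in a..b, hamiltonianDensity W u (x, y) ≤ 8 * K := by
  obtain ⟨t, v, v', hv, hv_sol, hv'K, hc⟩ := hu.exists_profile_first_integral_eq_zero hW
  linarith [hu.integral_hamiltonianDensity_le_integral_limit hW hv hab y,
    hv_sol.integral_potential_le hW hc hv'K hab]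

theorem setIntegral_energy_le (hu : IsMonotoneSolution W K u) (hW : IsBistable W θ) {R : ℝ}
    (hR : 0 ≤ R) : ∫ p in Icc (-R) R ×ˢ Icc (-R ^ 2) (R ^ 2),
      (grushinGradSq u p / 2 + W (u p)) ≤ 20 * K * R ^ 2 := by
  have hRR : -R ≤ R := neg_le_self hR
  have hRR' : -R ^ 2 ≤ R ^ 2 := neg_le_self (sq_nonneg R)
  have hY := hu.contDiff_pY.continuous
  have hH := hu.continuous_hamiltonianDensity hW.contDiff.continuous
  have hvert : Continuous fun p : ℝ × ℝ => p.1 ^ 2 * pY u p * pY u p := by fun_prop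
  have hcompact : IsCompact (Icc (-R) R ×ˢ Icc (-R ^ 2) (R ^ 2)) :=
    isCompact_Icc.prod isCompact_Icc
  have hslice : ∀ x ∈ Icc (-R) R,
      ∫ y in -R ^ 2..R ^ 2, x ^ 2 * pY u (x, y) * pY u (x, y) ≤ 2 * (R * K) := fun x hx => by
    refine (le_abs_self _).trans (hu.abs_integral_mul_pY_le (mul_nonneg hR hu.bound_nonneg) hRR'
      fun y _ => ?_)
    rw [sq, mul_assoc, abs_mul]
    exact mul_le_mul (abs_le.2 hx) (hu.abs_fst_mul_pY_le (x, y)) (abs_nonneg _) hR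
  calc ∫ p in Icc (-R) R ×ˢ Icc (-R ^ 2) (R ^ 2), (grushinGradSq u p / 2 + W (u p))
      = (∫ p in Icc (-R) R ×ˢ Icc (-R ^ 2) (R ^ 2), hamiltonianDensity W u p)
        + ∫ p in Icc (-R) R ×ˢ Icc (-R ^ 2) (R ^ 2), p.1 ^ 2 * pY u p * pY u p := by
        rw [← integral_add (hH.continuousOn.integrableOn_compact hcompact)
          (hvert.continuousOn.integrableOn_compact hcompact)]
        congr 1 with p
        rw [grushinGradSq, hamiltonianDensity]
        ring
    _ ≤ (R ^ 2 - -R ^ 2) * (8 * K) + (R - -R) * (2 * (R * K)) :=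
        add_le_add (setIntegral_prod_le_of_slice_le' hH hRR hRR'
            fun y _ => hu.integral_hamiltonianDensity_le_eight_mul hW hRR y)
          (setIntegral_prod_le_of_slice_le hvert hRR hRR' hslice)
    _ = 20 * K * R ^ 2 := by ring

theorem continuous_grushinGradSq (hu : IsMonotoneSolution W K u) :
    Continuous (grushinGradSq u) := by
  have hX := hu.contDiff_pX.continuous
  have hY := hu.contDiff_pY.continuous
  unfold grushinGradSq
  fun_prop

theorem setIntegral_fst_sq_mul_grushinGradSq_le (hu : IsMonotoneSolution W K u)
    (hW : IsBistable W θ) {R : ℝ} (hR : 0 ≤ R) :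
    ∫ p in Icc (-R) R ×ˢ Icc (-R ^ 2) (R ^ 2), p.1 ^ 2 * grushinGradSq u p ≤
      2 * (20 * K) * R ^ 4 := by
  have hgrad := hu.continuous_grushinGradSq
  have hcontW := hW.contDiff.continuous
  have hcont := hu.contDiff.continuous
  have hcompact : IsCompact (Icc (-R) R ×ˢ Icc (-R ^ 2) (R ^ 2)) :=
    isCompact_Icc.prod isCompact_Icc
  calc ∫ p in Icc (-R) R ×ˢ Icc (-R ^ 2) (R ^ 2), p.1 ^ 2 * grushinGradSq u p
      ≤ ∫ p in Icc (-R) R ×ˢ Icc (-R ^ 2) (R ^ 2),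
          2 * R ^ 2 * (grushinGradSq u p / 2 + W (u p)) := by
        refine setIntegral_mono_on
          (Continuous.continuousOn (by fun_prop) |>.integrableOn_compact hcompact)
          (Continuous.continuousOn (by fun_prop) |>.integrableOn_compact hcompact)
          hcompact.measurableSet fun p hp => ?_
        nlinarith [mul_le_mul_of_nonneg_right (sq_le_sq' hp.1.1 hp.1.2) (grushinGradSq_nonneg u p),
          mul_nonneg (sq_nonneg R) (hW.nonneg (u p))]
    _ = 2 * R ^ 2 * ∫ p in Icc (-R) R ×ˢ Icc (-R ^ 2) (R ^ 2),
          (grushinGradSq u p / 2 + W (u p)) := integral_const_mul _ _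
    _ ≤ 2 * R ^ 2 * (20 * K * R ^ 2) :=
        mul_le_mul_of_nonneg_left (hu.setIntegral_energy_le hW hR) (by positivity)
    _ = 2 * (20 * K) * R ^ 4 := by ring

end IsMonotoneSolution

theorem monotone_energy_estimate_general (K : ℝ) :
    ∃ C > (0 : ℝ), ∀ (W : ℝ → ℝ) (θ : ℝ), IsBistable W θ →
      ∀ u : ℝ × ℝ → ℝ, IsMonotoneSolution W K u → ∀ R : ℝ, 0 < R →
        (∫ p in gBall 0 R, (grushinGradSq u p / 2 + W (u p))) ≤ C * R ^ 2 ∧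
        (∫ p in gBall 0 R, p.1 ^ 2 * grushinGradSq u p) ≤ 2 * C * R ^ 4 := by
  have hC : 20 * K ≤ 20 * |K| + 1 := by linarith [le_abs_self K]
  refine ⟨20 * |K| + 1, by positivity, fun W θ hW u hu R hR => ?_⟩
  have hgrad := hu.continuous_grushinGradSq
  have hcont := hu.contDiff.continuous
  have hcontW := hW.contDiff.continuous
  constructor
  · calc ∫ p in gBall 0 R, (grushinGradSq u p / 2 + W (u p))
        ≤ 20 * K * R ^ 2 := (setIntegral_gBall_le (by fun_prop) (fun p => add_nonneg
          (div_nonneg (grushinGradSq_nonneg u p) zero_le_two) (hW.nonneg _)) hR.le).trans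
          (hu.setIntegral_energy_le hW hR.le)
      _ ≤ (20 * |K| + 1) * R ^ 2 := by gcongr
  · calc ∫ p in gBall 0 R, p.1 ^ 2 * grushinGradSq u p
        ≤ 2 * (20 * K) * R ^ 4 := (setIntegral_gBall_le (by fun_prop) (fun p =>
          mul_nonneg (sq_nonneg p.1) (grushinGradSq_nonneg u p)) hR.le).trans
          (hu.setIntegral_fst_sq_mul_grushinGradSq_le hW hR.le)
      _ ≤ 2 * (20 * |K| + 1) * R ^ 4 := by gcongr

/-- energy estimate. If `u ∈ C²(ℝ², [−1,1])`, with `|∇_G u| ≤ K`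
everywhere, solves `Δ_G u = W'(u)` in `ℝ²` and `∂_y u > 0`, then there is a constant
`C > 0` depending only on `W` and `K` such that, for every `R > 0`,
`∫_{B_R(0)} (|∇_G u|²/2 + W(u)) ≤ C R²` and consequently
`∫_{B_R(0)} x² |∇_G u|² ≤ 2 C R⁴`. -/
theorem monotone_energy_estimate (W : ℝ → ℝ) (hW : DoubleWell W) (K : ℝ) :
    ∃ C > (0 : ℝ), ∀ u : ℝ × ℝ → ℝ, ContDiff ℝ 2 u →
      (∀ p : ℝ × ℝ, u p ∈ Set.Icc (-1 : ℝ) 1) →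
      (∀ p : ℝ × ℝ, Real.sqrt (grushinGradSq u p) ≤ K) →
      (∀ p : ℝ × ℝ, grushinLap u p = deriv W (u p)) →
      (∀ p : ℝ × ℝ, 0 < pY u p) →
      ∀ R : ℝ, 0 < R →
        (∫ p in gBall 0 R, (grushinGradSq u p / 2 + W (u p))) ≤ C * R ^ 2 ∧
        (∫ p in gBall 0 R, p.1 ^ 2 * grushinGradSq u p) ≤ 2 * C * R ^ 4 := by
  obtain ⟨C, hC, h⟩ := monotone_energy_estimate_general K
  exact ⟨C, hC, fun u hdiff hmem hgrad hsol hmono R hR =>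
    h W 0 hW.isBistable u ⟨hdiff, hmem, hgrad, hsol, hmono⟩ R hR⟩
end
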